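/- arXiv:1208.3161 — 2 statements merged into one kernel-verified Lean document; each statement's English description precedes it below -/
import Mathlib

section
/- Fix an integer c ≥ 2, and let T be the rank-one transformation constructed with r_n = 3, s_{n,0} = 0, s_{n,1} = 1, and s_{n,2} chosen so that h_{n+1} = 3^c h_n for every n (so that h_n = 3^{cn} and s_{n,2} ≥ 3h_n + 1). Then T is rationally weakly mixing: with F = I the unit interval, for all measurable A, B ⊆ I one has (1/a_n(I)) ∑_{k=0}^{n−1} |μ(A ∩ T^k B) − μ(A)μ(B) u_k(I)| → 0 as n → ∞. -/
open MeasureTheory Filter Set Pointwise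

/-- A rank-one cutting-and-stacking transformation of a subset `X ⊆ ℝ` (with Lebesgue
measure), given by columns `C n` consisting of `h n` levels (open intervals) of width `w n`,
with `pos n j` the left endpoint of the level of height `j` in column `C n`; column `C (n+1)`
is obtained from `C n` by cutting into `r n ≥ 2` subcolumns of equal width, adding `s n k`
spacers above the `k`-th subcolumn, and stacking. -/
structure RankOne where
  X : Set ℝ
  T : ℝ ≃ᵐ ℝ
  r : ℕ → ℕ
  s : ℕ → ℕ → ℕ
  h : ℕ → ℕ
  w : ℕ → ℝ
  pos : ℕ → ℕ → ℝ
  hr : ∀ n, 2 ≤ r n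
  h0 : h 0 = 1
  w0 : w 0 = 1
  pos0 : pos 0 0 = 0
  hrec : ∀ n, h (n + 1) = ∑ k ∈ Finset.range (r n), (h n + s n k)
  wrec : ∀ n, w (n + 1) = w n / (r n : ℝ)
  hX : X = ⋃ n, ⋃ j < h n, Set.Ioo (pos n j) (pos n j + w n)
  disj : ∀ n, ∀ j < h n, ∀ j' < h n, j ≠ j' →
    Disjoint (Set.Ioo (pos n j) (pos n j + w n)) (Set.Ioo (pos n j') (pos n j' + w n))
  stack : ∀ n, ∀ j < h n, ∀ k < r n,
    pos (n + 1) ((∑ i ∈ Finset.range k, (h n + s n i)) + j) = pos n j + (k : ℝ) * w (n + 1)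
  Tmap : ∀ n j, j + 1 < h n → ∀ x ∈ Set.Ioo (pos n j) (pos n j + w n),
    T x = x + (pos n (j + 1) - pos n j)
  Tbij : Set.BijOn (⇑T) X X
  Tpres : MeasurePreserving (⇑T) (volume.restrict X) (volume.restrict X)

namespace RankOne

/-- The level of height `j` in column `C n`. -/
def lvl (S : RankOne) (n j : ℕ) : Set ℝ := Set.Ioo (S.pos n j) (S.pos n j + S.w n)

/-- The measure on the space: Lebesgue measure restricted to `X`. -/
noncomputable def μ (S : RankOne) : Measure ℝ := volume.restrict S.X

/-- The intrinsic weight sequence `u n F = μ(F ∩ TⁿF) / μ(F)²`. -/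
noncomputable def u (S : RankOne) (F : Set ℝ) (n : ℕ) : ℝ :=
  (S.μ (F ∩ (⇑S.T)^[n] '' F)).toReal / (S.μ F).toReal ^ 2

/-- `a n F = ∑_{k<n} u k F`. -/
noncomputable def a (S : RankOne) (F : Set ℝ) (n : ℕ) : ℝ :=
  ∑ k ∈ Finset.range n, S.u F k

/-- `T` is normal if spacers are added above the rightmost subcolumn infinitely often. -/
def Normal (S : RankOne) : Prop := ∀ m, ∃ n, m ≤ n ∧ 0 < S.s n (S.r n - 1)

/-- `T` grows exponentially: `2 s_{n, r_n - 1} ≥ h_{n+1}` for every `n`. -/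
def ExpGrowing (S : RankOne) : Prop := ∀ n, S.h (n + 1) ≤ 2 * S.s n (S.r n - 1)

/-- `T` has a bounded number of cuts: `sup r_n < ∞`. -/
def BoundedCuts (S : RankOne) : Prop := ∃ c, ∀ n, S.r n ≤ c

/-- `H n = {0} ∪ {∑_{k≤i} (h n + s n k) : 0 ≤ i < r n - 1}`. -/
def Hset (S : RankOne) (n : ℕ) : Finset ℕ :=
  insert 0 ((Finset.range (S.r n - 1)).image fun i => ∑ k ∈ Finset.range (i + 1), (S.h n + S.s n k))

/-- The set of heights in column `C N` of the descendants of the level of height `p`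
in column `C j`: `D(J, N) = p + H j ⊕ H (j+1) ⊕ ⋯ ⊕ H (N-1)`. -/
def desc (S : RankOne) (j p : ℕ) : ℕ → Finset ℕ
  | 0 => {p}
  | N + 1 => if N < j then {p} else desc S j p N + S.Hset N

/-- `M m`: the maximal height of a descendant of the unit interval `I` in column `C m`. -/
def M (S : RankOne) (m : ℕ) : ℕ := (S.desc 0 0 m).sup id

/-- The ergodic sum `S_n(1_F)(x) = ∑_{k<n} 1_F(T^k x)`. -/
noncomputable def birkhoff (S : RankOne) (F : Set ℝ) (n : ℕ) (x : ℝ) : ℝ :=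
  ∑ k ∈ Finset.range n, Set.indicator F (fun _ => (1 : ℝ)) ((⇑S.T)^[k] x)

/-- `T` is rationally weakly mixing on `F`. -/
def RWMOn (S : RankOne) (F : Set ℝ) : Prop :=
  MeasurableSet F ∧ 0 < S.μ F ∧ S.μ F ≠ ⊤ ∧
  ∀ A B : Set ℝ, MeasurableSet A → A ⊆ F → MeasurableSet B → B ⊆ F →
    Tendsto (fun n => (S.a F n)⁻¹ *
      ∑ k ∈ Finset.range n,
        |(S.μ (A ∩ (⇑S.T)^[k] '' B)).toReal - (S.μ A).toReal * (S.μ B).toReal * S.u F k|)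
      atTop (nhds 0)

/-- `T` is rationally weakly mixing. -/
def RWM (S : RankOne) : Prop := ∃ F, S.RWMOn F

/-- `T` is rationally ergodic: some set `F` of positive finite measure satisfies a
Renyi inequality. -/
def RatErgodic (S : RankOne) : Prop :=
  ∃ (F : Set ℝ) (c : ℝ), MeasurableSet F ∧ 0 < S.μ F ∧ S.μ F ≠ ⊤ ∧
    ∀ n, ∫ x in F, (S.birkhoff F n x) ^ 2 ∂S.μ ≤ c * (∫ x in F, S.birkhoff F n x ∂S.μ) ^ 2

/-- `T` is spectrally weakly mixing: every bounded measurable eigenfunction is a.e. constant. -/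
def SpecWM (S : RankOne) : Prop :=
  ∀ (f : ℝ → ℂ) (z : ℂ), Measurable f → (∃ C, ∀ᵐ x ∂S.μ, ‖f x‖ ≤ C) →
    (∀ᵐ x ∂S.μ, f (S.T x) = z * f x) → ∃ c : ℂ, ∀ᵐ x ∂S.μ, f x = c

/-- `T` is zero-type: `μ(A ∩ TⁿA) → 0` for all `A` of finite measure. -/
def ZeroType (S : RankOne) : Prop :=
  ∀ A : Set ℝ, MeasurableSet A → S.μ A ≠ ⊤ →
    Tendsto (fun n => S.μ (A ∩ (⇑S.T)^[n] '' A)) atTop (nhds 0)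

/-- The `i`-th nonzero element of `H n` (for `i < r n - 1`): `e n i = ∑_{k ≤ i} (h n + s n k)`. -/
def e (S : RankOne) (n i : ℕ) : ℕ := ∑ k ∈ Finset.range (i + 1), (S.h n + S.s n k)

/-- `T` is steep: listing the nonzero elements of `H 0`, then `H 1`, etc., as `t 1, t 2, …`,
each successive element is at least `4` times the previous one. -/
def Steep (S : RankOne) : Prop :=
  (∀ n i, i + 2 < S.r n → 4 * S.e n i ≤ S.e n (i + 1)) ∧
  (∀ n, 4 * S.e n (S.r n - 2) ≤ S.e (n + 1) 0)

/-- `T` is almost steep. -/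
def AlmostSteep (S : RankOne) : Prop :=
  ∀ n, 3 ≤ S.r n ∧ S.s n 0 = 0 ∧ S.s n 1 = 1 ∧
    ∀ i, 2 ≤ i → i ≤ S.r n - 1 →
      4 * (∑ k ∈ Finset.range i, (S.h n + S.s n k)) ≤ ∑ k ∈ Finset.range (i + 1), (S.h n + S.s n k)

/-- `A` is a finite union of levels of `T`. -/
def FinUnionLevels (S : RankOne) (A : Set ℝ) : Prop :=
  ∃ q : Finset (ℕ × ℕ), (∀ v ∈ q, v.2 < S.h v.1) ∧ A = ⋃ v ∈ q, S.lvl v.1 v.2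

end RankOne


namespace Aux18

/-- ordered product `q j * q (j+1) * ... * q (j+L-1)` -/
def prodQ {R : Type*} [Monoid R] (q : ℕ → R) : ℕ → ℕ → R
  | _, 0 => 1
  | j, L + 1 => q j * prodQ q (j + 1) L

lemma prodQ_succ {R : Type*} [Monoid R] (q : ℕ → R) (L : ℕ) : ∀ j,
    prodQ q j (L + 1) = prodQ q j L * q (j + L) := by
  induction L with
  | zero => intro j; simp [prodQ]
  | succ L ih =>
    intro j
    rw [prodQ, ih (j + 1), prodQ, mul_assoc, show j + 1 + L = j + (L + 1) by ring]

lemma central_bound (q : ℕ) :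
    ((Nat.centralBinom q : ℝ) / 4 ^ q) ^ 2 * (2 * q + 1) ≤ 1 := by
  induction q with
  | zero => simp
  | succ q ih =>
    have h := Nat.succ_mul_centralBinom_succ q
    have h' : ((q : ℝ) + 1) * (Nat.centralBinom (q + 1) : ℝ)
        = 2 * (2 * q + 1) * Nat.centralBinom q := by exact_mod_cast h
    have h2 : (Nat.centralBinom (q + 1) : ℝ)
        = 2 * (2 * q + 1) * Nat.centralBinom q / (q + 1) := by
      field_simp; linarith
    rw [h2]
    set x : ℝ := (Nat.centralBinom q : ℝ) / 4 ^ q with hx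
    have e : (2 * (2 * (q : ℝ) + 1) * Nat.centralBinom q / (q + 1) / 4 ^ (q + 1)) ^ 2
        * (2 * ((q + 1 : ℕ) : ℝ) + 1)
        = (x ^ 2 * (2 * q + 1)) * ((2 * q + 1) * (2 * q + 3) / (2 * q + 2) ^ 2) := by
      rw [hx]; push_cast; field_simp; ring
    rw [e]
    have hq : (0 : ℝ) ≤ q := Nat.cast_nonneg q
    have : (2 * (q : ℝ) + 1) * (2 * q + 3) / (2 * q + 2) ^ 2 ≤ 1 := by
      rw [div_le_one (by positivity)]; nlinarith
    exact mul_le_one₀ ih (by positivity) this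

lemma central_tendsto :
    Tendsto (fun q : ℕ => (Nat.centralBinom q : ℝ) / 4 ^ q) atTop (nhds 0) := by
  have h1 : Tendsto (fun q : ℕ => Real.sqrt (1 / ((q : ℝ) + 1))) atTop (nhds 0) := by
    have := (tendsto_one_div_add_atTop_nhds_zero_nat (𝕜 := ℝ)).sqrt
    simpa using this
  refine squeeze_zero (fun q => by positivity) (fun q => ?_) h1
  apply Real.le_sqrt_of_sq_le
  rw [le_div_iff₀ (by positivity)]
  refine le_trans ?_ (central_bound q)
  gcongr
  have : (0 : ℝ) ≤ q := Nat.cast_nonneg q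
  linarith

lemma sum_abs_choose (q : ℕ) :
    ∑ k ∈ Finset.range (2 * q), |((2 * q).choose (k + 1) : ℝ) - (2 * q).choose k|
      ≤ 2 * Nat.centralBinom q - 2 := by
  rw [two_mul q, Finset.sum_range_add, ← two_mul]
  have h1 : ∑ k ∈ Finset.range q, |((2 * q).choose (k + 1) : ℝ) - (2 * q).choose k|
      = Nat.centralBinom q - 1 := by
    rw [Finset.sum_congr rfl (g := fun k => ((2 * q).choose (k + 1) : ℝ) - (2 * q).choose k)]
    · rw [Finset.sum_range_sub (fun k => ((2 * q).choose k : ℝ))]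
      simp [Nat.centralBinom]
    · intro k hk
      have hk := Finset.mem_range.1 hk
      apply abs_of_nonneg
      rw [sub_nonneg, Nat.cast_le]
      exact Nat.choose_le_succ_of_lt_half_left (by omega)
  have h2 : ∑ k ∈ Finset.range q,
      |((2 * q).choose (q + k + 1) : ℝ) - (2 * q).choose (q + k)|
      = Nat.centralBinom q - 1 := by
    rw [← h1, ← Finset.sum_range_reflect]
    apply Finset.sum_congr rfl
    intro k hk
    have hk := Finset.mem_range.1 hk
    rw [← Nat.choose_symm (n := 2 * q) (k := q + (q - 1 - k) + 1) (by omega),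
      ← Nat.choose_symm (n := 2 * q) (k := q + (q - 1 - k)) (by omega), abs_sub_comm]
    congr 4 <;> omega
  rw [h1, h2]; linarith

lemma one_sub_mul_pow {R : Type*} [Ring R] (u : R) (m : ℕ) :
    (1 - u) * (1 + u) ^ m = 1 + ∑ k ∈ Finset.range m,
      (((m.choose (k + 1) : ℤ) - m.choose k : ℤ) : R) * u ^ (k + 1) - u ^ (m + 1) := by
  have h : (1 + u) ^ m = ∑ k ∈ Finset.range (m + 1), u ^ k * (m.choose k : R) := by
    rw [add_comm, (Commute.one_right u).add_pow]; simp
  have h' : ∀ k, u ^ k * (m.choose k : R) = (m.choose k : R) * u ^ k := fun k =>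
    (Nat.cast_commute _ _).symm
  simp_rw [h'] at h
  rw [sub_mul, one_mul]
  have e1 : (1 + u) ^ m = ∑ k ∈ Finset.range m, (m.choose (k + 1) : R) * u ^ (k + 1) + 1 := by
    rw [h, Finset.sum_range_succ']; simp
  have e2 : u * (1 + u) ^ m = ∑ k ∈ Finset.range m, (m.choose k : R) * u ^ (k + 1)
      + u ^ (m + 1) := by
    rw [h, Finset.mul_sum, Finset.sum_range_succ]
    congr 1
    · apply Finset.sum_congr rfl
      intro k _
      rw [← mul_assoc, ← (Nat.cast_commute _ u).eq, mul_assoc, pow_succ']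
    · simp [pow_succ']
  rw [e2, e1]
  push_cast
  simp_rw [sub_mul]
  rw [Finset.sum_sub_distrib]
  abel

lemma binom_norm {R : Type*} [NormedRing R] [NormedAlgebra ℝ R] (u : R)
    (hu : ∀ k : ℕ, ‖u ^ k‖ ≤ 1) :
    Tendsto (fun q : ℕ => ‖(1 - u) * ((1 / 2 : ℝ) • (1 + u)) ^ (2 * q)‖) atTop (nhds 0) := by
  have h := central_tendsto.const_mul 2
  rw [mul_zero] at h
  refine squeeze_zero (fun q => norm_nonneg _) (fun q => ?_) h
  rw [smul_pow, mul_smul_comm, norm_smul, one_sub_mul_pow]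
  have h1 : ‖(1 : R) + ∑ k ∈ Finset.range (2 * q),
      ((((2 * q).choose (k + 1) : ℤ) - (2 * q).choose k : ℤ) : R) * u ^ (k + 1)
        - u ^ (2 * q + 1)‖ ≤ 1 + (2 * Nat.centralBinom q - 2) + 1 := by
    refine (norm_sub_le _ _).trans (add_le_add ((norm_add_le _ _).trans (add_le_add ?_ ?_)) (hu _))
    · simpa using hu 0
    · refine (norm_sum_le _ _).trans (le_trans (Finset.sum_le_sum fun k _ => ?_) (sum_abs_choose q))
      rw [← zsmul_eq_mul, ← Int.cast_smul_eq_zsmul ℝ, norm_smul]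
      refine (mul_le_of_le_one_right (norm_nonneg _) (hu _)).trans ?_
      rw [Real.norm_eq_abs]; push_cast; rfl
  have h2 : ‖((1 / 2 : ℝ) ^ (2 * q))‖ = 1 / 4 ^ q := by
    rw [pow_mul, Real.norm_of_nonneg (by positivity), show (1 / 2 : ℝ) ^ 2 = 1 / 4 by norm_num,
      one_div_pow]
  rw [h2]
  calc 1 / (4 : ℝ) ^ q * _ ≤ 1 / (4 : ℝ) ^ q * (1 + (2 * Nat.centralBinom q - 2) + 1) := by gcongr
    _ = _ := by ring

/-- The key analytic lemma. -/
lemma key {R : Type*} [NormedRing R] [NormedAlgebra ℝ R] (u : R)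
    (hu : ∀ k : ℕ, ‖u ^ k‖ ≤ 1) (q z r : ℕ → R)
    (hq : ∀ i, q i = (4 / 9 : ℝ) • (z i * ((1 / 2 : ℝ) • (1 + u))) + (5 / 9 : ℝ) • r i)
    (hz : ∀ i, ‖z i‖ ≤ 1) (hrr : ∀ i, ‖r i‖ ≤ 1) (hq1 : ∀ i, ‖q i‖ ≤ 1)
    (hzc : ∀ i, Commute u (z i)) (hrc : ∀ i, Commute u (r i)) (j : ℕ) :
    Tendsto (fun L => ‖(1 - u) * prodQ q j L‖) atTop (nhds 0) := by
  set y : R := (1 / 2 : ℝ) • (1 + u) with hy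
  have huy : Commute u y := ((Commute.one_right u).add_right (Commute.refl u)).smul_right _
  have hyz : ∀ i, Commute y (z i) := fun i =>
    ((Commute.one_left _).add_left (hzc i)).smul_left _
  have hyr : ∀ i, Commute y (r i) := fun i =>
    ((Commute.one_left _).add_left (hrc i)).smul_left _
  have hyq : ∀ i, Commute y (q i) := fun i => by
    rw [hq]
    exact (((hyz i).mul_right (Commute.refl y)).smul_right _).add_right ((hyr i).smul_right _)
  have hyP : ∀ L j, Commute y (prodQ q j L) := by
    intro L
    induction L with
    | zero => intro j; exact Commute.one_right y
    | succ L ih => intro j; exact (hyq j).mul_right (ih (j + 1))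
  clear_value y
  let G : ℕ → ℕ → ℝ := fun m L => ‖(1 - u) * y ^ m * prodQ q j L‖
  have hanti : ∀ m, Antitone (G m) := fun m => antitone_nat_of_succ_le fun L => by
    simp only [G]
    rw [prodQ_succ, ← mul_assoc]
    exact (norm_mul_le _ _).trans (mul_le_of_le_one_right (norm_nonneg _) (hq1 _))
  have hbdd : ∀ m, BddBelow (Set.range (G m)) := fun m =>
    ⟨0, by rintro _ ⟨L, rfl⟩; exact norm_nonneg _⟩
  let g : ℕ → ℝ := fun m => ⨅ L, G m L
  have hlim : ∀ m, Tendsto (G m) atTop (nhds (g m)) := fun m =>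
    tendsto_atTop_ciInf (hanti m) (hbdd m)
  have hstep : ∀ m, g m ≤ g (m + 1) := by
    intro m
    have hrec : ∀ L, G m (L + 1) ≤ 4 / 9 * G (m + 1) L + 5 / 9 * G m L := by
      intro L
      simp only [G]
      have e : (1 - u) * y ^ m * prodQ q j (L + 1)
          = (4 / 9 : ℝ) • ((1 - u) * y ^ (m + 1) * prodQ q j L * z (j + L))
            + (5 / 9 : ℝ) • ((1 - u) * y ^ m * prodQ q j L * r (j + L)) := by
        rw [prodQ_succ, hq (j + L), mul_add, mul_add, mul_smul_comm, mul_smul_comm,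
          mul_smul_comm, mul_smul_comm, ← mul_assoc (prodQ q j L) (z (j + L)) y]
        congr 2
        · rw [pow_succ]
          have h1 : prodQ q j L * z (j + L) * y = y * (prodQ q j L * z (j + L)) :=
            (((hyP L j).mul_right (hyz _)).eq).symm
          rw [h1]; simp only [mul_assoc]
        · simp only [mul_assoc]
      rw [e]
      refine (norm_add_le _ _).trans (add_le_add ?_ ?_)
      · rw [norm_smul, show ‖(4 / 9 : ℝ)‖ = 4 / 9 by norm_num]
        gcongr
        exact (norm_mul_le _ _).trans (mul_le_of_le_one_right (norm_nonneg _) (hz _))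
      · rw [norm_smul, show ‖(5 / 9 : ℝ)‖ = 5 / 9 by norm_num]
        gcongr
        exact (norm_mul_le _ _).trans (mul_le_of_le_one_right (norm_nonneg _) (hrr _))
    have := le_of_tendsto_of_tendsto' ((tendsto_add_atTop_iff_nat 1).2 (hlim m))
      (((hlim (m + 1)).const_mul (4 / 9)).add ((hlim m).const_mul (5 / 9))) hrec
    linarith
  have hmono : Monotone g := monotone_nat_of_le_succ hstep
  have hg0 : g 0 ≤ 0 := by
    refine ge_of_tendsto' (binom_norm u hu) fun k => ?_
    refine (hmono (Nat.zero_le (2 * k))).trans ((ciInf_le (hbdd _) 0).trans ?_)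
    simp [G, prodQ, hy]
  have hg0' : g 0 = 0 := le_antisymm hg0 (le_ciInf fun L => norm_nonneg _)
  have := hlim 0
  rw [hg0'] at this
  simpa [G] using this

end Aux18

namespace Aux18

/-- offsets 0, h, 2h+1 -/
def offs (h : ℕ) (i : ℕ) : ℕ := if i = 0 then 0 else if i = 1 then h else 2 * h + 1

/-- abstract averaging element -/
noncomputable def qab {R : Type*} [NormedRing R] [NormedAlgebra ℝ R] (τ : ℤ → R) (h : ℕ) : R :=
  (1 / 9 : ℝ) • ∑ i ∈ Finset.range 3, ∑ i' ∈ Finset.range 3,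
    τ ((offs h i : ℤ) - offs h i')

lemma qab_norm {R : Type*} [NormedRing R] [NormedAlgebra ℝ R] (τ : ℤ → R)
    (hn : ∀ k, ‖τ k‖ ≤ 1) (h : ℕ) : ‖qab τ h‖ ≤ 1 := by
  rw [qab, norm_smul, show ‖(1 / 9 : ℝ)‖ = 1 / 9 by norm_num]
  have : ‖∑ i ∈ Finset.range 3, ∑ i' ∈ Finset.range 3, τ ((offs h i : ℤ) - offs h i')‖
      ≤ ∑ i ∈ Finset.range 3, ∑ i' ∈ Finset.range 3, (1 : ℝ) :=
    (norm_sum_le _ _).trans (Finset.sum_le_sum fun i _ =>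
      (norm_sum_le _ _).trans (Finset.sum_le_sum fun i' _ => hn _))
  norm_num at this
  linarith

lemma key_qab {R : Type*} [NormedRing R] [NormedAlgebra ℝ R] (τ : ℤ → R)
    (hn : ∀ k, ‖τ k‖ ≤ 1) (h0 : τ 0 = 1) (hadd : ∀ k l, τ (k + l) = τ k * τ l)
    (h : ℕ → ℕ) (j : ℕ) :
    Tendsto (fun L => ‖(1 - τ 1) * prodQ (fun i => qab τ (h i)) j L‖) atTop (nhds 0) := by
  have hcomm : ∀ k l, Commute (τ k) (τ l) := fun k l => by
    rw [Commute, SemiconjBy, ← hadd, ← hadd, add_comm]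
  have hpow : ∀ k : ℕ, τ 1 ^ k = τ k := by
    intro k
    induction k with
    | zero => simp [h0]
    | succ k ih => rw [pow_succ, ih, ← hadd]; push_cast; rfl
  refine key (τ 1) (fun k => by rw [hpow]; exact hn _) _
    (fun i => (1 / 2 : ℝ) • (τ (h i) + τ (-(h i) - 1)))
    (fun i => (1 / 5 : ℝ) • ((3 : ℝ) • τ 0 + τ (2 * h i + 1) + τ (-(2 * h i + 1))))
    ?_ ?_ ?_ (fun i => qab_norm τ hn _) ?_ ?_ j
  · intro i
    have e : ((1 / 2 : ℝ) • (τ (h i) + τ (-(h i) - 1))) * ((1 / 2 : ℝ) • (1 + τ 1))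
      = (1 / 4 : ℝ) • (τ (h i) + τ (-(h i) - 1) + τ (h i + 1) + τ (-(h i))) := by
      rw [smul_mul_smul_comm, mul_add, mul_one, add_mul, ← hadd, ← hadd,
        show -(h i : ℤ) - 1 + 1 = -(h i) by ring]
      module
    simp only [e]
    rw [qab]
    simp only [Finset.sum_range_succ, Finset.sum_range_zero, offs]
    norm_num
    have e1 : (2 * (h i : ℤ) + 1 - h i) = h i + 1 := by ring
    have e2 : ((h i : ℤ) - (2 * h i + 1)) = -(h i) - 1 := by ring
    have e3 : (-1 + -(2 * (h i : ℤ))) = -(2 * h i + 1) := by ring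
    simp only [e1, e2, e3]
    module
  · intro i
    rw [norm_smul, show ‖(1 / 2 : ℝ)‖ = 1 / 2 by norm_num]
    have := (norm_add_le (τ (h i)) (τ (-(h i) - 1))).trans (add_le_add (hn _) (hn _))
    linarith
  · intro i
    rw [norm_smul, show ‖(1 / 5 : ℝ)‖ = 1 / 5 by norm_num]
    have h3 : ‖(3 : ℝ) • τ 0‖ ≤ 3 := by
      rw [norm_smul, show ‖(3 : ℝ)‖ = 3 by norm_num]
      linarith [hn 0]
    have := (norm_add_le ((3 : ℝ) • τ 0 + τ (2 * h i + 1)) (τ (-(2 * h i + 1)))).trans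
      (add_le_add ((norm_add_le _ _).trans (add_le_add h3 (hn _))) (hn _))
    linarith
  · intro i
    exact ((hcomm _ _).add_right (hcomm _ _)).smul_right _
  · intro i
    exact ((((hcomm _ _).smul_right _).add_right (hcomm _ _)).add_right
      (hcomm _ _)).smul_right _

/-- bounded functions on the integers -/
abbrev BF := BoundedContinuousFunction ℤ ℝ

/-- translation by `k` -/
noncomputable def tr (k : ℤ) : BF →L[ℝ] BF :=
  LinearMap.mkContinuous
    { toFun := fun f => f.compContinuous ⟨fun t => t + k, continuous_of_discreteTopology⟩
      map_add' := fun f g => by ext; simp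
      map_smul' := fun a f => by ext; simp } 1
    (fun f => by
      rw [one_mul]
      refine (BoundedContinuousFunction.norm_le (norm_nonneg _)).2 fun t => ?_
      exact f.norm_coe_le_norm _)

lemma tr_apply (k : ℤ) (f : BF) (t : ℤ) : tr k f t = f (t + k) := rfl

lemma tr_norm (k : ℤ) : ‖tr k‖ ≤ 1 := LinearMap.mkContinuous_norm_le _ zero_le_one _

lemma tr_zero : tr 0 = 1 := by ext f t; simp [tr_apply]

lemma tr_add (k l : ℤ) : tr (k + l) = tr k * tr l := by
  ext f t; simp [tr_apply, add_assoc]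

lemma tr_sub_one (f : BF) (s t : ℤ) :
    |f s - f t| ≤ |(s - t : ℤ)| * ‖(1 - tr 1) f‖ := by
  wlog hst : t ≤ s generalizing s t
  · rw [abs_sub_comm, show (s - t : ℤ) = -(t - s) by ring, abs_neg]
    exact this t s (by omega)
  obtain ⟨m, rfl⟩ := Int.le.dest hst
  have : |f (t + m) - f t| ≤ m * ‖(1 - tr 1) f‖ := by
    clear hst
    induction m with
    | zero => simp
    | succ m ih =>
      have h := ((1 - tr 1) f).norm_coe_le_norm (t + m)
      have e : ((1 - tr 1) f) (t + m) = f (t + m) - f (t + m + 1) := by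
        simp [tr_apply]
      rw [e, Real.norm_eq_abs, abs_sub_comm] at h
      have e2 : f (t + (m + 1 : ℕ)) - f t
        = (f (t + m + 1) - f (t + m)) + (f (t + m) - f t) := by
        push_cast; rw [← add_assoc]; ring
      rw [e2]
      refine (abs_add_le _ _).trans ?_
      rw [Nat.cast_add, Nat.cast_one]
      linarith
  simpa using this

/-- the averaging operator -/
noncomputable def qop (h : ℕ) : BF →L[ℝ] BF := qab tr h

lemma qop_apply (h : ℕ) (f : BF) (t : ℤ) : 9 * qop h f t =
    ∑ i ∈ Finset.range 3, ∑ i' ∈ Finset.range 3, f (t + ((offs h i : ℤ) - offs h i')) := by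
  have : ((∑ i ∈ Finset.range 3, ∑ i' ∈ Finset.range 3,
    tr ((offs h i : ℤ) - offs h i')) f) t = ∑ i ∈ Finset.range 3, ∑ i' ∈ Finset.range 3,
      f (t + ((offs h i : ℤ) - offs h i')) := by
    simp [Finset.sum_range_succ, tr_apply]
  rw [← this, qop, qab]
  change 9 * ((1 / 9 : ℝ) * (((∑ i ∈ Finset.range 3, ∑ i' ∈ Finset.range 3,
    tr ((offs h i : ℤ) - offs h i')) f) t)) = _
  ring

lemma key_qop (h : ℕ → ℕ) (j : ℕ) :
    Tendsto (fun L => ‖(1 - tr 1) * prodQ (fun i => qop (h i)) j L‖) atTop (nhds 0) :=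
  key_qab tr tr_norm tr_zero tr_add h j

end Aux18

namespace Aux18

/-- the standing hypotheses -/
structure Hyp (c : ℕ) (S : RankOne) : Prop where
  hc : 2 ≤ c
  hr : ∀ n, S.r n = 3
  hs0 : ∀ n, S.s n 0 = 0
  hs1 : ∀ n, S.s n 1 = 1
  hh : ∀ n, S.h (n + 1) = 3 ^ c * S.h n

variable {c : ℕ} {S : RankOne}

lemma Hyp.nine (H : Hyp c S) (n : ℕ) : 9 * S.h n ≤ S.h (n + 1) := by
  rw [H.hh]
  have : 3 ^ 2 ≤ 3 ^ c := Nat.pow_le_pow_right (by norm_num) H.hc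
  exact Nat.mul_le_mul_right _ (by simpa using this)

lemma Hyp.nine_pow (H : Hyp c S) (n : ℕ) : 9 ^ n ≤ S.h n := by
  induction n with
  | zero => rw [S.h0]; simp
  | succ n ih => have := H.nine n; rw [pow_succ]; omega

lemma Hyp.hpos (H : Hyp c S) (n : ℕ) : 1 ≤ S.h n :=
  le_trans (Nat.one_le_pow _ _ (by norm_num)) (H.nine_pow n)

lemma Hyp.hmono (H : Hyp c S) : Monotone S.h := monotone_nat_of_le_succ fun n => by
  have := H.nine n; omega

lemma Hyp.step (H : Hyp c S) {n a i : ℕ} (ha : 3 * a ≤ S.h n) :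
    3 * (a + offs (S.h n) i) ≤ S.h (n + 1) := by
  have := H.nine n
  have := H.hpos n
  unfold offs
  split_ifs <;> omega

lemma Hyp.lt (H : Hyp c S) {n a : ℕ} (ha : 3 * a ≤ S.h n) : a < S.h n := by
  have := H.hpos n; omega

lemma Hyp.w_eq (H : Hyp c S) (n : ℕ) : S.w n = 1 / 3 ^ n := by
  induction n with
  | zero => simp [S.w0]
  | succ n ih => rw [S.wrec, H.hr, ih, pow_succ]; push_cast; field_simp

lemma Hyp.w_pos (H : Hyp c S) (n : ℕ) : 0 < S.w n := by rw [H.w_eq]; positivity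

lemma Hyp.pos_split (H : Hyp c S) {n a i : ℕ} (ha : a < S.h n) (hi : i < 3) :
    S.pos (n + 1) (a + offs (S.h n) i) = S.pos n a + (i : ℝ) * S.w (n + 1) := by
  rw [← S.stack n a ha i (by rw [H.hr]; exact hi)]
  congr 1
  rw [add_comm]
  congr 1
  interval_cases i
  · simp [offs]
  · simp [offs, H.hs0]
  · simp [offs, H.hs0, H.hs1, Finset.sum_range_succ]; ring

lemma meas_lvl (n j : ℕ) : MeasurableSet (S.lvl n j) := measurableSet_Ioo

lemma lvl_sub_X {n j : ℕ} (hj : j < S.h n) : S.lvl n j ⊆ S.X := by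
  rw [S.hX]
  exact fun x hx => Set.mem_iUnion.2 ⟨n, Set.mem_iUnion₂.2 ⟨j, hj, hx⟩⟩

lemma X_meas : MeasurableSet S.X := by
  rw [S.hX]
  exact MeasurableSet.iUnion fun n => MeasurableSet.iUnion fun j => MeasurableSet.iUnion
    fun _ => measurableSet_Ioo

lemma mu_lvl {n j : ℕ} (hj : j < S.h n) : S.μ (S.lvl n j) = ENNReal.ofReal (S.w n) := by
  rw [RankOne.μ, Measure.restrict_apply (meas_lvl n j),
    Set.inter_eq_left.2 (lvl_sub_X hj), RankOne.lvl, Real.volume_Ioo]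
  congr 1; ring

lemma disj_lvl {n j j' : ℕ} (hj : j < S.h n) (hj' : j' < S.h n) (hne : j ≠ j') :
    Disjoint (S.lvl n j) (S.lvl n j') := S.disj n j hj j' hj' hne

lemma meas_image (k : ℕ) {E : Set ℝ} (hE : MeasurableSet E) :
    MeasurableSet ((⇑S.T)^[k] '' E) := by
  induction k with
  | zero => simpa using hE
  | succ k ih =>
    rw [Function.iterate_succ', Set.image_comp]
    exact S.T.measurableSet_image.2 ih

lemma inj_iter (k : ℕ) : Function.Injective ((⇑S.T)^[k]) := S.T.injective.iterate k

lemma mu_image (k : ℕ) {E : Set ℝ} (hE : MeasurableSet E) :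
    S.μ ((⇑S.T)^[k] '' E) = S.μ E := by
  have h : MeasurePreserving ((⇑S.T)^[k]) S.μ S.μ := S.Tpres.iterate k
  rw [← h.measure_preimage (meas_image k hE).nullMeasurableSet,
    Set.preimage_image_eq _ (inj_iter k)]

lemma image_lvl {n b k : ℕ} (hb : b + k < S.h n) :
    (⇑S.T)^[k] '' S.lvl n b = S.lvl n (b + k) := by
  induction k with
  | zero => simp
  | succ k ih =>
    rw [Function.iterate_succ', Set.image_comp, ih (by omega)]
    have h := S.Tmap n (b + k) (by omega)
    have : (⇑S.T) '' S.lvl n (b + k)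
        = (fun x => x + (S.pos n (b + k + 1) - S.pos n (b + k))) '' S.lvl n (b + k) :=
      Set.image_congr h
    rw [this, RankOne.lvl, Set.image_add_const_Ioo]
    rw [RankOne.lvl, ← add_assoc b k 1]
    congr 1 <;> ring

/-- union of levels of column `N` with heights in `P` -/
def U (S : RankOne) (N : ℕ) (P : Finset ℕ) : Set ℝ := ⋃ a ∈ P, S.lvl N a

lemma meas_U (N : ℕ) (P : Finset ℕ) : MeasurableSet (U S N P) :=
  Finset.measurableSet_biUnion _ fun _ _ => meas_lvl _ _

/-- children -/
def child (S : RankOne) (N : ℕ) (P : Finset ℕ) : Finset ℕ :=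
  (P ×ˢ Finset.range 3).image fun v => v.1 + offs (S.h N) v.2

lemma Hyp.lvl_split (H : Hyp c S) {n a : ℕ} (ha : a < S.h n) {i : ℕ} (hi : i < 3) :
    S.lvl (n + 1) (a + offs (S.h n) i) ⊆ S.lvl n a := by
  have hw := H.w_pos (n + 1)
  have hw3 : S.w n = 3 * S.w (n + 1) := by rw [S.wrec, H.hr]; push_cast; ring
  rw [RankOne.lvl, RankOne.lvl, H.pos_split ha hi, hw3]
  apply Set.Ioo_subset_Ioo
  · have : 0 ≤ (i : ℝ) * S.w (n + 1) := by positivity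
    linarith
  · have : (i : ℝ) ≤ 2 := by exact_mod_cast (by omega : i ≤ 2)
    nlinarith

lemma Hyp.lvl_split_null (H : Hyp c S) {n a : ℕ} (ha : a < S.h n) :
    S.μ (S.lvl n a \ U S (n + 1) (child S n {a})) = 0 := by
  have hw := H.w_pos (n + 1)
  have hw3 : S.w n = 3 * S.w (n + 1) := by rw [S.wrec, H.hr]; push_cast; ring
  have hsub : S.lvl n a \ U S (n + 1) (child S n {a})
      ⊆ {S.pos n a + S.w (n + 1), S.pos n a + 2 * S.w (n + 1)} := by
    rintro x ⟨hx, hxU⟩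
    by_contra hne
    simp only [Set.mem_insert_iff, Set.mem_singleton_iff, not_or] at hne
    apply hxU
    have hmem : ∀ i : ℕ, i < 3 → x ∈ Set.Ioo (S.pos n a + (i : ℝ) * S.w (n + 1))
        (S.pos n a + (i : ℝ) * S.w (n + 1) + S.w (n + 1)) →
        x ∈ U S (n + 1) (child S n {a}) := by
      intro i hi hxi
      refine Set.mem_iUnion₂.2 ⟨a + offs (S.h n) i, ?_, ?_⟩
      · exact Finset.mem_image.2 ⟨(a, i), by simp [hi], rfl⟩
      · rw [RankOne.lvl, H.pos_split ha hi]; exact hxi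
    rw [RankOne.lvl, hw3] at hx
    obtain ⟨h1, h2⟩ := hx
    rcases lt_or_gt_of_ne hne.1 with h | h
    · exact hmem 0 (by norm_num) ⟨by push_cast; linarith, by push_cast; linarith⟩
    rcases lt_or_gt_of_ne hne.2 with h' | h'
    · exact hmem 1 (by norm_num) ⟨by push_cast; linarith, by push_cast; linarith⟩
    · exact hmem 2 (by norm_num) ⟨by push_cast; linarith, by push_cast; linarith⟩
  refine measure_mono_null hsub ?_
  have : (volume : Measure ℝ) {S.pos n a + S.w (n + 1), S.pos n a + 2 * S.w (n + 1)} = 0 :=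
    Set.Finite.measure_zero (Set.toFinite _) _
  exact Measure.absolutelyContinuous_of_le Measure.restrict_le_self this

lemma child_bound (H : Hyp c S) {N : ℕ} {P : Finset ℕ} (hP : ∀ a ∈ P, 3 * a ≤ S.h N) :
    ∀ a ∈ child S N P, 3 * a ≤ S.h (N + 1) := by
  intro a ha
  obtain ⟨v, hv, rfl⟩ := Finset.mem_image.1 ha
  exact H.step (hP _ (Finset.mem_product.1 hv).1)

lemma U_child_sub (H : Hyp c S) {N : ℕ} {P : Finset ℕ} (hP : ∀ a ∈ P, 3 * a ≤ S.h N) :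
    U S (N + 1) (child S N P) ⊆ U S N P := by
  refine Set.iUnion₂_subset fun a ha => ?_
  obtain ⟨v, hv, rfl⟩ := Finset.mem_image.1 ha
  have hv := Finset.mem_product.1 hv
  exact (H.lvl_split (H.lt (hP _ hv.1)) (Finset.mem_range.1 hv.2)).trans
    (Set.subset_biUnion_of_mem (u := fun a => S.lvl N a) hv.1)

lemma U_child_null (H : Hyp c S) {N : ℕ} {P : Finset ℕ} (hP : ∀ a ∈ P, 3 * a ≤ S.h N) :
    S.μ (U S N P \ U S (N + 1) (child S N P)) = 0 := by
  have hsub : U S N P \ U S (N + 1) (child S N P)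
      ⊆ ⋃ a ∈ P, (S.lvl N a \ U S (N + 1) (child S N {a})) := by
    rintro x ⟨hx, hx'⟩
    obtain ⟨a, ha, hxa⟩ := Set.mem_iUnion₂.1 hx
    refine Set.mem_iUnion₂.2 ⟨a, ha, hxa, fun h => hx' ?_⟩
    obtain ⟨b, hb, hxb⟩ := Set.mem_iUnion₂.1 h
    refine Set.mem_iUnion₂.2 ⟨b, ?_, hxb⟩
    refine Finset.image_subset_image (Finset.product_subset_product_left ?_) hb
    simpa using ha
  refine measure_mono_null hsub ?_
  refine (measure_biUnion_null_iff P.countable_toSet).2 ?_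
  exact fun a ha => H.lvl_split_null (H.lt (hP a ha))

/-- descendants of the unit interval -/
def D (S : RankOne) : ℕ → Finset ℕ
  | 0 => {0}
  | N + 1 => child S N (D S N)

lemma D_bound (H : Hyp c S) (N : ℕ) : ∀ a ∈ D S N, 3 * a ≤ S.h N := by
  induction N with
  | zero => intro a ha; simp [D] at ha; simp [ha]
  | succ N ih => exact child_bound H ih

lemma U_D_sub (H : Hyp c S) (N : ℕ) : U S N (D S N) ⊆ S.lvl 0 0 := by
  induction N with
  | zero => simp [U, D]
  | succ N ih => exact (U_child_sub H (D_bound H N)).trans ih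

lemma U_D_null (H : Hyp c S) (N : ℕ) : S.μ (S.lvl 0 0 \ U S N (D S N)) = 0 := by
  induction N with
  | zero => simp [U, D]
  | succ N ih =>
    refine measure_mono_null ?_ (measure_union_null ih (U_child_null H (D_bound H N)))
    rintro x ⟨hx, hx'⟩
    by_cases h : x ∈ U S N (D S N)
    · exact Or.inr ⟨h, hx'⟩
    · exact Or.inl ⟨hx, h⟩

lemma D_card (N : ℕ) : (D S N).card ≤ 3 ^ N := by
  induction N with
  | zero => simp [D]
  | succ N ih =>
    refine Finset.card_image_le.trans ?_
    rw [Finset.card_product, Finset.card_range, pow_succ]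
    exact Nat.mul_le_mul_right _ ih

lemma mu_I : S.μ (S.lvl 0 0) = 1 := by
  rw [mu_lvl (by rw [S.h0]; norm_num), S.w0, ENNReal.ofReal_one]

lemma mu_U (H : Hyp c S) {N : ℕ} {P : Finset ℕ} (hP : ∀ a ∈ P, 3 * a ≤ S.h N) :
    S.μ.real (U S N P) = P.card * S.w N := by
  rw [Measure.real, U, measure_biUnion_finset]
  · rw [Finset.sum_congr rfl fun a ha => mu_lvl (H.lt (hP a ha))]
    simp [ENNReal.toReal_ofReal (H.w_pos N).le]
  · exact fun a ha b hb hab => disj_lvl (H.lt (hP a ha)) (H.lt (hP b hb)) hab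
  · exact fun a _ => meas_lvl _ _

lemma D_card_w (H : Hyp c S) (N : ℕ) : ((D S N).card : ℝ) * S.w N = 1 := by
  rw [← mu_U H (D_bound H N), Measure.real]
  have : S.μ (U S N (D S N)) = S.μ (S.lvl 0 0) := by
    refine le_antisymm (measure_mono (U_D_sub H N)) ?_
    refine (measure_le_inter_add_sdiff _ _ (U S N (D S N))).trans ?_
    rw [U_D_null H N, add_zero]
    exact measure_mono Set.inter_subset_right
  rw [this, mu_I, ENNReal.toReal_one]

end Aux18

namespace Aux18
variable {c : ℕ} {S : RankOne}

/-- correlation of two sets -/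
noncomputable def cor (S : RankOne) (E F : Set ℝ) (k : ℕ) : ℝ := S.μ.real (E ∩ (⇑S.T)^[k] '' F)

/-- correlation of two levels -/
noncomputable def m (S : RankOne) (N a b k : ℕ) : ℝ := cor S (S.lvl N a) (S.lvl N b) k

lemma cor_congr {E E' F F' : Set ℝ} (k : ℕ) (hE : E' ⊆ E) (hE0 : S.μ (E \ E') = 0)
    (hF : F' ⊆ F) (hF0 : S.μ (F \ F') = 0) (hFm : MeasurableSet F) (hFm' : MeasurableSet F') :
    cor S E F k = cor S E' F' k := by
  unfold cor Measure.real
  congr 1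
  refine le_antisymm ?_ (measure_mono (Set.inter_subset_inter hE (Set.image_mono hF)))
  have h0 : S.μ ((⇑S.T)^[k] '' (F \ F')) = 0 := by rw [mu_image k (hFm.diff hFm'), hF0]
  have hsub : E ∩ (⇑S.T)^[k] '' F ⊆
      (E' ∩ (⇑S.T)^[k] '' F') ∪ ((E \ E') ∪ (⇑S.T)^[k] '' (F \ F')) := by
    rintro x ⟨hx, y, hy, rfl⟩
    by_cases h1 : (⇑S.T)^[k] y ∈ E'
    · by_cases h2 : y ∈ F'
      · exact Or.inl ⟨h1, y, h2, rfl⟩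
      · exact Or.inr (Or.inr ⟨y, ⟨hy, h2⟩, rfl⟩)
    · exact Or.inr (Or.inl ⟨hx, h1⟩)
  refine (measure_mono hsub).trans ((measure_union_le _ _).trans ?_)
  rw [measure_union_null hE0 h0, add_zero]

lemma cor_U (H : Hyp c S) {N : ℕ} {P Q : Finset ℕ} (hP : ∀ a ∈ P, 3 * a ≤ S.h N)
    (hQ : ∀ a ∈ Q, 3 * a ≤ S.h N) (k : ℕ) :
    cor S (U S N P) (U S N Q) k = ∑ a ∈ P, ∑ b ∈ Q, m S N a b k := by
  have e : U S N P ∩ (⇑S.T)^[k] '' (U S N Q)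
      = ⋃ v ∈ P ×ˢ Q, (S.lvl N v.1 ∩ (⇑S.T)^[k] '' S.lvl N v.2) := by
    ext x
    simp only [U, Set.mem_inter_iff, Set.mem_iUnion, Set.mem_image, Finset.mem_product,
      exists_prop, Prod.exists]
    constructor
    · rintro ⟨⟨a, ha, hxa⟩, y, ⟨b, hb, hyb⟩, rfl⟩
      exact ⟨a, b, ⟨ha, hb⟩, hxa, y, hyb, rfl⟩
    · rintro ⟨a, b, ⟨ha, hb⟩, hxa, y, hyb, rfl⟩
      exact ⟨⟨a, ha, hxa⟩, y, ⟨b, hb, hyb⟩, rfl⟩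
  have htop : ∀ v ∈ P ×ˢ Q, S.μ (S.lvl N v.1 ∩ (⇑S.T)^[k] '' S.lvl N v.2) ≠ ⊤ := by
    intro v hv
    have hv := Finset.mem_product.1 hv
    refine ne_top_of_le_ne_top ?_ (measure_mono Set.inter_subset_left)
    rw [mu_lvl (H.lt (hP _ hv.1))]
    exact ENNReal.ofReal_ne_top
  rw [cor, e, measureReal_biUnion_finset ?_ ?_ htop, Finset.sum_product]
  · rfl
  · rintro ⟨a, b⟩ hv ⟨a', b'⟩ hv' hne
    have hv := Finset.mem_product.1 (Finset.mem_coe.1 hv)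
    have hv' := Finset.mem_product.1 (Finset.mem_coe.1 hv')
    by_cases h : a = a'
    · have hb : b ≠ b' := fun hb => hne (by rw [h, hb])
      have := disj_lvl (H.lt (hQ _ hv.2)) (H.lt (hQ _ hv'.2)) hb
      exact ((Set.disjoint_image_iff (inj_iter k)).2 this).mono
        Set.inter_subset_right Set.inter_subset_right
    · exact (disj_lvl (H.lt (hP _ hv.1)) (H.lt (hP _ hv'.1)) h).mono
        Set.inter_subset_left Set.inter_subset_left
  · exact fun v _ => (meas_lvl _ _).inter (meas_image k (meas_lvl _ _))

lemma sum_child (H : Hyp c S) (N a : ℕ) (f : ℕ → ℝ) :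
    ∑ x ∈ child S N {a}, f x = ∑ i ∈ Finset.range 3, f (a + offs (S.h N) i) := by
  rw [child, Finset.sum_image, Finset.sum_product, Finset.sum_singleton]
  rintro ⟨x, i⟩ hv ⟨x', i'⟩ hv' h
  have hp := H.hpos N
  simp only [Finset.coe_product, Finset.coe_singleton, Finset.coe_range, Set.mem_prod,
    Set.mem_singleton_iff, Set.mem_Iio] at hv hv' h
  obtain ⟨rfl, hi⟩ := hv
  obtain ⟨rfl, hi'⟩ := hv'
  congr 1
  unfold offs at h
  split_ifs at h <;> omega

lemma m_split (H : Hyp c S) {N a b : ℕ} (ha : 3 * a ≤ S.h N) (hb : 3 * b ≤ S.h N) (k : ℕ) :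
    m S N a b k = ∑ i ∈ Finset.range 3, ∑ i' ∈ Finset.range 3,
      m S (N + 1) (a + offs (S.h N) i) (b + offs (S.h N) i') k := by
  have ha' : ∀ x ∈ ({a} : Finset ℕ), 3 * x ≤ S.h N := by simpa using ha
  have hb' : ∀ x ∈ ({b} : Finset ℕ), 3 * x ≤ S.h N := by simpa using hb
  have e : ∀ x, S.lvl N x = U S N {x} := fun x => by simp [U]
  rw [m, e a, e b, cor_congr k (U_child_sub H ha') (U_child_null H ha') (U_child_sub H hb')
    (U_child_null H hb') (meas_U _ _) (meas_U _ _),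
    cor_U H (child_bound H ha') (child_bound H hb'), sum_child H]
  exact Finset.sum_congr rfl fun i _ => sum_child H _ _ _

lemma m_base (H : Hyp c S) {N a b k : ℕ} (ha : 3 * a ≤ S.h N) (hb : b + k < S.h N) :
    m S N a b k = if a = b + k then S.w N else 0 := by
  rw [m, cor, image_lvl hb]
  split_ifs with h
  · rw [← h, Set.inter_self, Measure.real, mu_lvl (H.lt ha), ENNReal.toReal_ofReal (H.w_pos N).le]
  · rw [(disj_lvl (H.lt ha) hb h).inter_eq]; simp

lemma descent (H : Hyp c S) (n : ℕ) (σ : BF) (L : ℕ) : ∀ (j a b : ℕ), 3 * a ≤ S.h j →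
    3 * b ≤ S.h j → 2 * n ≤ S.h (j + L) + 1 → (∀ t : ℤ, t < 0 → σ t = 0) →
    (∀ t : ℤ, n ≤ t → σ t = 0) →
    ∑ k ∈ Finset.range n, σ k * m S j a b k
      = S.w (j + L) * 9 ^ L * (prodQ (fun i => qop (S.h i)) j L σ) ((a : ℤ) - b) := by
  induction L with
  | zero =>
    intro j a b ha hb hn h0 h1
    rw [add_zero] at hn
    have hp := H.hpos j
    have : ∀ k ∈ Finset.range n, σ k * m S j a b k
        = if (k : ℤ) = (a : ℤ) - b then σ ((a : ℤ) - b) * S.w j else 0 := by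
      intro k hk
      have hk := Finset.mem_range.1 hk
      rw [m_base H ha (by omega)]
      by_cases h : a = b + k
      · have : (k : ℤ) = (a : ℤ) - b := by omega
        rw [if_pos h, if_pos this, this]
      · rw [if_neg h, if_neg (by omega), mul_zero]
    rw [Finset.sum_congr rfl this]
    change _ = S.w j * 9 ^ 0 * σ ((a : ℤ) - b)
    by_cases hlt : (a : ℤ) - b < 0
    · rw [h0 _ hlt]; simp
    by_cases hge : (n : ℤ) ≤ (a : ℤ) - b
    · rw [h1 _ hge]; simp
    have e : ∀ k : ℕ, ((k : ℤ) = (a : ℤ) - b) ↔ (k = a - b) := fun k => by omega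
    simp_rw [e]
    rw [Finset.sum_ite_eq' , if_pos (Finset.mem_range.2 (by omega))]
    ring
  | succ L ih =>
    intro j a b ha hb hn h0 h1
    have e1 : ∑ k ∈ Finset.range n, σ k * m S j a b k
        = ∑ i ∈ Finset.range 3, ∑ i' ∈ Finset.range 3, ∑ k ∈ Finset.range n,
          σ k * m S (j + 1) (a + offs (S.h j) i) (b + offs (S.h j) i') k := by
      simp_rw [m_split H ha hb, Finset.mul_sum]
      rw [Finset.sum_comm]
      exact Finset.sum_congr rfl fun i _ => Finset.sum_comm
    rw [e1]
    have hj : j + (L + 1) = j + 1 + L := by ring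
    rw [hj] at hn ⊢
    have e2 : ∀ i i', ∑ k ∈ Finset.range n,
          σ k * m S (j + 1) (a + offs (S.h j) i) (b + offs (S.h j) i') k
        = S.w (j + 1 + L) * 9 ^ L * (prodQ (fun i => qop (S.h i)) (j + 1) L σ)
          (((a : ℤ) - b) + ((offs (S.h j) i : ℤ) - offs (S.h j) i')) := by
      intro i i'
      rw [ih (j + 1) _ _ (H.step ha) (H.step hb) hn h0 h1]
      congr 2
      push_cast; ring
    simp_rw [e2, ← Finset.mul_sum]
    rw [← qop_apply]
    change _ = S.w (j + 1 + L) * 9 ^ (L + 1) *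
      (qop (S.h j) (prodQ (fun i => qop (S.h i)) (j + 1) L σ)) ((a : ℤ) - b)
    ring

lemma lower_aux (H : Hyp c S) (n : ℕ) (L : ℕ) : ∀ (j a b : ℕ), 3 * a ≤ S.h j →
    3 * b ≤ S.h j → n = (S.h (j + L) + 1) / 2 →
    S.w (j + L) * 9 ^ L ≤ ∑ k ∈ Finset.range n, (m S j a b k + m S j b a k) := by
  induction L with
  | zero =>
    intro j a b ha hb hn
    rw [add_zero] at hn ⊢
    have hp := H.hpos j
    have hw := H.w_pos j
    wlog hab : b ≤ a generalizing a b
    · simp_rw [add_comm (m S j a b _)]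
      exact this b a hb ha (by omega)
    have hnn : ∀ k ∈ Finset.range n, 0 ≤ m S j a b k + m S j b a k := fun k _ =>
      add_nonneg measureReal_nonneg measureReal_nonneg
    have hk : a - b ∈ Finset.range n := Finset.mem_range.2 (by omega)
    refine le_trans ?_ (Finset.single_le_sum hnn hk)
    rw [m_base H ha (by omega), if_pos (by omega)]
    have : 0 ≤ m S j b a (a - b) := measureReal_nonneg
    simpa using this
  | succ L ih =>
    intro j a b ha hb hn
    have hj : j + (L + 1) = j + 1 + L := by ring
    rw [hj] at hn ⊢
    have e1 : ∑ k ∈ Finset.range n, (m S j a b k + m S j b a k)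
        = ∑ i ∈ Finset.range 3, ∑ i' ∈ Finset.range 3, ∑ k ∈ Finset.range n,
          (m S (j + 1) (a + offs (S.h j) i) (b + offs (S.h j) i') k
            + m S (j + 1) (b + offs (S.h j) i') (a + offs (S.h j) i) k) := by
      have : ∀ k, m S j a b k + m S j b a k
        = ∑ i ∈ Finset.range 3, ∑ i' ∈ Finset.range 3,
          (m S (j + 1) (a + offs (S.h j) i) (b + offs (S.h j) i') k
            + m S (j + 1) (b + offs (S.h j) i') (a + offs (S.h j) i) k) := by
        intro k
        rw [m_split H ha hb, m_split H hb ha]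
        simp_rw [Finset.sum_add_distrib]
        congr 1
        exact Finset.sum_comm
      simp_rw [this]
      rw [Finset.sum_comm]
      exact Finset.sum_congr rfl fun i _ => Finset.sum_comm
    rw [e1]
    have : ∑ i ∈ Finset.range 3, ∑ i' ∈ Finset.range 3, S.w (j + 1 + L) * 9 ^ L
        = S.w (j + 1 + L) * 9 ^ (L + 1) := by
      simp only [Finset.sum_const, Finset.card_range, nsmul_eq_mul]; push_cast; ring
    rw [← this]
    exact Finset.sum_le_sum fun i _ => Finset.sum_le_sum fun i' _ =>
      ih (j + 1) _ _ (H.step ha) (H.step hb) hn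

lemma u_eq (k : ℕ) : S.u (S.lvl 0 0) k = cor S (S.lvl 0 0) (S.lvl 0 0) k := by
  rw [RankOne.u, mu_I]; simp [cor, Measure.real]

lemma lower (H : Hyp c S) {n K : ℕ} (hn : S.h K ≤ 2 * n) :
    (3 : ℝ) ^ K / 2 ≤ S.a (S.lvl 0 0) n := by
  have h := lower_aux H ((S.h (0 + K) + 1) / 2) K 0 0 0 (by simp) (by simp) rfl
  rw [zero_add] at h
  have e : S.w K * 9 ^ K = 3 ^ K := by
    rw [H.w_eq, show (9 : ℝ) = 3 * 3 by norm_num, mul_pow]; field_simp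
  rw [e, Finset.sum_add_distrib] at h
  have h2 : ∑ k ∈ Finset.range ((S.h K + 1) / 2), m S 0 0 0 k ≤ S.a (S.lvl 0 0) n := by
    rw [RankOne.a]
    simp_rw [u_eq]
    exact Finset.sum_le_sum_of_subset_of_nonneg
      (Finset.range_subset_range.2 (by omega)) fun _ _ _ => measureReal_nonneg
  linarith

lemma level_bound (H : Hyp c S) (j : ℕ) : ∃ δ : ℕ → ℝ, Tendsto δ atTop (nhds 0) ∧
    ∀ N, j ≤ N → ∀ n, 2 * n ≤ S.h N + 1 → ∀ a b a' b', 3 * a ≤ S.h j → 3 * b ≤ S.h j →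
      3 * a' ≤ S.h j → 3 * b' ≤ S.h j →
      ∑ k ∈ Finset.range n, |m S j a b k - m S j a' b' k| ≤ 3 ^ N * δ N := by
  refine ⟨fun N => (4 * S.h j) * ‖(1 - tr 1) * prodQ (fun i => qop (S.h i)) j (N - j)‖, ?_, ?_⟩
  · have := ((key_qop S.h j).comp (tendsto_sub_atTop_nat j)).const_mul (4 * (S.h j : ℝ))
    simpa using this
  · intro N hN n hn a b a' b' ha hb ha' hb'
    obtain ⟨L, rfl⟩ := Nat.exists_eq_add_of_le hN
    simp only [Nat.add_sub_cancel_left]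
    let sg : ℤ → ℝ := fun t => if 0 ≤ t ∧ t < n then
      SignType.sign (m S j a b t.toNat - m S j a' b' t.toNat) else 0
    have hsg : ∀ t, ‖sg t‖ ≤ 1 := by
      intro t
      simp only [sg]
      split_ifs
      · rcases SignType.sign (m S j a b t.toNat - m S j a' b' t.toNat) with _ | _ | _ <;> simp
      · simp
    let σ : BF := BoundedContinuousFunction.ofNormedAddCommGroup sg
      continuous_of_discreteTopology 1 hsg
    have hσ : ‖σ‖ ≤ 1 := BoundedContinuousFunction.norm_ofNormedAddCommGroup_le _ zero_le_one hsg
    have hσ0 : ∀ t : ℤ, t < 0 → σ t = 0 := fun t ht => by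
      change sg t = 0
      simp only [sg]; rw [if_neg (by omega)]
    have hσ1 : ∀ t : ℤ, n ≤ t → σ t = 0 := fun t ht => by
      change sg t = 0
      simp only [sg]; rw [if_neg (by omega)]
    have e : ∑ k ∈ Finset.range n, |m S j a b k - m S j a' b' k|
        = ∑ k ∈ Finset.range n, σ k * m S j a b k - ∑ k ∈ Finset.range n, σ k * m S j a' b' k := by
      rw [← Finset.sum_sub_distrib]
      refine Finset.sum_congr rfl fun k hk => ?_
      have hk := Finset.mem_range.1 hk
      have : σ k = SignType.sign (m S j a b k - m S j a' b' k) := by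
        change sg k = _
        simp only [sg]; rw [if_pos (by omega)]; simp
      rw [this, ← mul_sub, sign_mul_self]
    rw [e, descent H n σ L j a b ha hb hn hσ0 hσ1, descent H n σ L j a' b' ha' hb' hn hσ0 hσ1,
      ← mul_sub]
    set f : BF := prodQ (fun i => qop (S.h i)) j L σ with hf
    have h1 : f ((a : ℤ) - b) - f ((a' : ℤ) - b') ≤ (4 * S.h j) *
        ‖(1 - tr 1) * prodQ (fun i => qop (S.h i)) j L‖ := by
      refine (le_abs_self _).trans ((tr_sub_one f _ _).trans ?_)
      gcongr
      · have : |((a : ℤ) - b - (a' - b') : ℤ)| ≤ 4 * S.h j := by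
          rw [abs_le]; constructor <;> omega
        exact_mod_cast this
      · have : (1 - tr 1) f = ((1 - tr 1) * prodQ (fun i => qop (S.h i)) j L) σ := rfl
        rw [this]
        exact (ContinuousLinearMap.le_opNorm _ _).trans
          (mul_le_of_le_one_right (norm_nonneg _) hσ)
    have h2 : S.w (j + L) * 9 ^ L ≤ 3 ^ (j + L) := by
      have : (9 : ℝ) ^ L ≤ 9 ^ (j + L) := pow_le_pow_right₀ (by norm_num) (by omega)
      calc S.w (j + L) * 9 ^ L ≤ S.w (j + L) * 9 ^ (j + L) := by
            have := (H.w_pos (j + L)).le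
            gcongr
        _ = 3 ^ (j + L) := by
            rw [H.w_eq, show (9 : ℝ) = 3 * 3 by norm_num, mul_pow]; field_simp
    have h3 : 0 ≤ S.w (j + L) * 9 ^ L := mul_nonneg (H.w_pos _).le (by positivity)
    calc _ ≤ S.w (j + L) * 9 ^ L * ((4 * S.h j) *
        ‖(1 - tr 1) * prodQ (fun i => qop (S.h i)) j L‖) := mul_le_mul_of_nonneg_left h1 h3
      _ ≤ _ := by gcongr

end Aux18

namespace Aux18
variable {c : ℕ} {S : RankOne}

lemma cover (H : Hyp c S) (N : ℕ) {F : Set ℝ} (hF : F ⊆ S.lvl 0 0) :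
    ∃ Z : Set ℝ, MeasurableSet Z ∧ S.μ Z = 0 ∧ F ⊆ (⋃ b ∈ D S N, F ∩ S.lvl N b) ∪ Z := by
  refine ⟨S.lvl 0 0 \ U S N (D S N), (meas_lvl _ _).diff (meas_U _ _), U_D_null H N, ?_⟩
  intro x hx
  by_cases h : x ∈ U S N (D S N)
  · obtain ⟨b, hb, hxb⟩ := Set.mem_iUnion₂.1 h
    exact Or.inl (Set.mem_iUnion₂.2 ⟨b, hb, hx, hxb⟩)
  · exact Or.inr ⟨hF hx, h⟩

lemma sum_inter_le {ι : Type*} (s : Finset ι) (g : ι → ℕ) {N : ℕ} (hg : Set.InjOn g s)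
    (hlt : ∀ i ∈ s, g i < S.h N) {E : Set ℝ} (hE : MeasurableSet E) :
    ∑ i ∈ s, S.μ (E ∩ S.lvl N (g i)) ≤ S.μ E := by
  rw [← measure_biUnion_finset]
  · exact measure_mono (Set.iUnion₂_subset fun i _ => Set.inter_subset_left)
  · intro i hi i' hi' hne
    exact (disj_lvl (hlt i hi) (hlt i' hi') fun h => hne (hg hi hi' h)).mono
      Set.inter_subset_right Set.inter_subset_right
  · exact fun i _ => hE.inter (meas_lvl _ _)

lemma cor_le_sum (H : Hyp c S) (N : ℕ) {E F : Set ℝ} (hF : F ⊆ S.lvl 0 0) (k : ℕ) :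
    S.μ (E ∩ (⇑S.T)^[k] '' F) ≤ ∑ b ∈ D S N, S.μ (E ∩ (⇑S.T)^[k] '' (F ∩ S.lvl N b)) := by
  obtain ⟨Z, hZm, hZ, hcov⟩ := cover H N hF
  have hsub : E ∩ (⇑S.T)^[k] '' F ⊆
      (⋃ b ∈ D S N, E ∩ (⇑S.T)^[k] '' (F ∩ S.lvl N b)) ∪ (⇑S.T)^[k] '' Z := by
    rintro x ⟨hx, y, hy, rfl⟩
    rcases hcov hy with h | h
    · obtain ⟨b, hb, hyb⟩ := Set.mem_iUnion₂.1 h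
      exact Or.inl (Set.mem_iUnion₂.2 ⟨b, hb, hx, y, hyb, rfl⟩)
    · exact Or.inr ⟨y, h, rfl⟩
  refine (measure_mono hsub).trans ((measure_union_le _ _).trans ?_)
  rw [mu_image k hZm, hZ, add_zero]
  exact measure_biUnion_finset_le _ _

lemma upper_left (H : Hyp c S) {N n : ℕ} (hn : 2 * n ≤ S.h N + 1) {E F : Set ℝ}
    (hE : MeasurableSet E) (hF : F ⊆ S.lvl 0 0) :
    ∑ k ∈ Finset.range n, S.μ (E ∩ (⇑S.T)^[k] '' F) ≤ 3 ^ N * S.μ E := by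
  have hp := H.hpos N
  calc ∑ k ∈ Finset.range n, S.μ (E ∩ (⇑S.T)^[k] '' F)
      ≤ ∑ k ∈ Finset.range n, ∑ b ∈ D S N, S.μ (E ∩ S.lvl N (b + k)) := by
        refine Finset.sum_le_sum fun k hk => (cor_le_sum H N hF k).trans
          (Finset.sum_le_sum fun b hb => measure_mono (Set.inter_subset_inter_right _ ?_))
        have hk := Finset.mem_range.1 hk
        have hb := D_bound H N b hb
        rw [← image_lvl (S := S) (n := N) (b := b) (k := k) (by omega)]
        exact Set.image_mono Set.inter_subset_right
    _ = ∑ b ∈ D S N, ∑ k ∈ Finset.range n, S.μ (E ∩ S.lvl N (b + k)) := Finset.sum_comm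
    _ ≤ ∑ b ∈ D S N, S.μ E := by
        refine Finset.sum_le_sum fun b hb => sum_inter_le _ (fun k => b + k) ?_ ?_ hE
        · intro k _ k' _ h; simpa using h
        · intro k hk
          have hk := Finset.mem_range.1 hk
          have hb := D_bound H N b hb
          omega
    _ ≤ 3 ^ N * S.μ E := by
        rw [Finset.sum_const, nsmul_eq_mul]
        gcongr
        exact_mod_cast D_card (S := S) N

lemma upper_right (H : Hyp c S) {N n : ℕ} (hn : 2 * n ≤ S.h N + 1) {E F : Set ℝ}
    (hE : E ⊆ S.lvl 0 0) (hFm : MeasurableSet F) (hF : F ⊆ S.lvl 0 0) :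
    ∑ k ∈ Finset.range n, S.μ (E ∩ (⇑S.T)^[k] '' F) ≤ 3 ^ N * S.μ F := by
  have hp := H.hpos N
  calc ∑ k ∈ Finset.range n, S.μ (E ∩ (⇑S.T)^[k] '' F)
      ≤ ∑ k ∈ Finset.range n, ∑ b ∈ D S N, ∑ a ∈ D S N,
          if k = a - b then S.μ (F ∩ S.lvl N b) else 0 := by
        refine Finset.sum_le_sum fun k hk => (cor_le_sum H N hF k).trans
          (Finset.sum_le_sum fun b hb => ?_)
        have hk := Finset.mem_range.1 hk
        have hb := D_bound H N b hb
        have himg : (⇑S.T)^[k] '' (F ∩ S.lvl N b) ⊆ S.lvl N (b + k) := by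
          rw [← image_lvl (S := S) (n := N) (b := b) (k := k) (by omega)]
          exact Set.image_mono Set.inter_subset_right
        have hle : S.μ (E ∩ (⇑S.T)^[k] '' (F ∩ S.lvl N b)) ≤ S.μ (F ∩ S.lvl N b) := by
          rw [← mu_image k (hFm.inter (meas_lvl N b))]
          exact measure_mono Set.inter_subset_right
        by_cases h : b + k ∈ D S N
        · refine le_trans ?_ (Finset.single_le_sum (fun _ _ => zero_le) h)
          rw [if_pos (by omega)]
          exact hle
        · refine le_trans (le_of_eq ?_) zero_le
          obtain ⟨Z, hZm, hZ, hcov⟩ := cover H N hE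
          refine measure_mono_null ?_ hZ
          rintro x ⟨hx, hx'⟩
          rcases hcov hx with h' | h'
          · obtain ⟨a, ha, hxa⟩ := Set.mem_iUnion₂.1 h'
            have hab : a ≠ b + k := fun e => h (e ▸ ha)
            exact absurd (himg hx') (Set.disjoint_left.1
              (disj_lvl (H.lt (D_bound H N a ha)) (by omega) hab) hxa.2)
          · exact h'
    _ = ∑ a ∈ D S N, ∑ b ∈ D S N, ∑ k ∈ Finset.range n,
          (if k = a - b then S.μ (F ∩ S.lvl N b) else 0) := by
        rw [Finset.sum_comm, Finset.sum_comm (s := D S N) (t := D S N)]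
        exact Finset.sum_congr rfl fun b _ => Finset.sum_comm
    _ ≤ ∑ a ∈ D S N, ∑ b ∈ D S N, S.μ (F ∩ S.lvl N b) := by
        refine Finset.sum_le_sum fun a _ => Finset.sum_le_sum fun b _ => ?_
        rw [Finset.sum_ite_eq']
        split_ifs
        · exact le_rfl
        · exact zero_le
    _ ≤ ∑ a ∈ D S N, S.μ F := by
        refine Finset.sum_le_sum fun a _ => sum_inter_le _ (fun b => b) ?_ ?_ hFm
        · exact fun _ _ _ _ h => h
        · exact fun b hb => H.lt (D_bound H N b hb)
    _ ≤ 3 ^ N * S.μ F := by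
        rw [Finset.sum_const, nsmul_eq_mul]
        gcongr
        exact_mod_cast D_card (S := S) N

lemma fin_of_sub {E : Set ℝ} (hE : E ⊆ S.lvl 0 0) : S.μ E ≠ ⊤ :=
  ne_top_of_le_ne_top (by rw [mu_I]; exact ENNReal.one_ne_top) (measure_mono hE)

lemma toReal_sum_le {n N : ℕ} {f : ℕ → Set ℝ} {x : Set ℝ} (hf : ∀ k, S.μ (f k) ≠ ⊤)
    (hx : S.μ x ≠ ⊤) (h : ∑ k ∈ Finset.range n, S.μ (f k) ≤ 3 ^ N * S.μ x) :
    ∑ k ∈ Finset.range n, S.μ.real (f k) ≤ 3 ^ N * S.μ.real x := by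
  have := ENNReal.toReal_mono (ENNReal.mul_ne_top (by simp) hx) h
  rw [ENNReal.toReal_sum fun k _ => hf k] at this
  simpa [Measure.real] using this

lemma upper_left' (H : Hyp c S) {N n : ℕ} (hn : 2 * n ≤ S.h N + 1) {E F : Set ℝ}
    (hE : MeasurableSet E) (hEI : E ⊆ S.lvl 0 0) (hF : F ⊆ S.lvl 0 0) :
    ∑ k ∈ Finset.range n, cor S E F k ≤ 3 ^ N * S.μ.real E :=
  toReal_sum_le (fun _ => fin_of_sub (Set.inter_subset_left.trans hEI)) (fin_of_sub hEI)
    (upper_left H hn hE hF)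

lemma upper_right' (H : Hyp c S) {N n : ℕ} (hn : 2 * n ≤ S.h N + 1) {E F : Set ℝ}
    (hE : E ⊆ S.lvl 0 0) (hFm : MeasurableSet F) (hF : F ⊆ S.lvl 0 0) :
    ∑ k ∈ Finset.range n, cor S E F k ≤ 3 ^ N * S.μ.real F :=
  toReal_sum_le (fun _ => fin_of_sub (Set.inter_subset_left.trans hE)) (fin_of_sub hF)
    (upper_right H hn hE hFm hF)

lemma cor_diff {A A' B B' : Set ℝ} (hA : MeasurableSet A) (hAI : A ⊆ S.lvl 0 0)
    (hA' : MeasurableSet A') (hAI' : A' ⊆ S.lvl 0 0) (hB : MeasurableSet B)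
    (hB' : MeasurableSet B') (k : ℕ) :
    |cor S A B k - cor S A' B' k| ≤ cor S (symmDiff A A') B k + cor S A' (symmDiff B B') k := by
  unfold cor
  refine (abs_measureReal_sub_le_measureReal_symmDiff' (hA.inter (meas_image k hB)).nullMeasurableSet
    (hA'.inter (meas_image k hB')).nullMeasurableSet
    (fin_of_sub (Set.inter_subset_left.trans hAI))
    (fin_of_sub (Set.inter_subset_left.trans hAI'))).trans ?_
  refine le_trans (measureReal_mono ?_ ?_) (measureReal_union_le _ _)
  · rw [Set.image_symmDiff (inj_iter k)]
    intro x
    simp only [Set.mem_symmDiff, Set.mem_inter_iff, Set.mem_union]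
    tauto
  · apply fin_of_sub
    refine Set.union_subset (Set.inter_subset_left.trans ?_) (Set.inter_subset_left.trans hAI')
    exact Set.symmDiff_subset_union.trans (Set.union_subset hAI hAI')

lemma approx (H : Hyp c S) {A : Set ℝ} (hA : MeasurableSet A) (hAI : A ⊆ S.lvl 0 0)
    {ε : ℝ} (hε : 0 < ε) : ∃ j₀, ∀ j, j₀ ≤ j → ∃ P ⊆ D S j,
      S.μ.real (symmDiff A (U S j P)) ≤ ε := by
  have hvA : volume A ≠ ⊤ := ne_top_of_le_ne_top
    (by rw [RankOne.lvl, Real.volume_Ioo]; exact ENNReal.ofReal_ne_top) (measure_mono hAI)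
  have hε2 : ENNReal.ofReal (ε / 2) ≠ 0 := by simpa using hε
  obtain ⟨K, hKA, hK, hKε⟩ := hA.exists_isCompact_sdiff_lt hvA hε2
  obtain ⟨V, hAV, hV, -, hVε⟩ := hA.exists_isOpen_sdiff_lt hvA hε2
  obtain ⟨d, hd, hdV⟩ := hK.exists_thickening_subset_open hV (hKA.trans hAV)
  obtain ⟨j₀, hj₀⟩ := exists_pow_lt_of_lt_one hd (show (1 / 3 : ℝ) < 1 by norm_num)
  refine ⟨j₀, fun j hj => ?_⟩
  have hw : S.w j < d := by
    rw [H.w_eq, ← one_div_pow]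
    exact lt_of_le_of_lt (pow_le_pow_of_le_one (by norm_num) (by norm_num) hj) hj₀
  classical
  refine ⟨(D S j).filter fun a => (S.lvl j a ∩ K).Nonempty, Finset.filter_subset _ _, ?_⟩
  set P := (D S j).filter fun a => (S.lvl j a ∩ K).Nonempty with hP
  have hUV : U S j P ⊆ V := by
    refine Set.iUnion₂_subset fun a ha x hx => hdV ?_
    obtain ⟨y, hy, hyK⟩ := (Finset.mem_filter.1 ha).2
    refine Metric.mem_thickening_iff.2 ⟨y, hyK, ?_⟩
    rw [Real.dist_eq, abs_lt]
    obtain ⟨h1, h2⟩ := hx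
    obtain ⟨h3, h4⟩ := hy
    constructor <;> linarith
  have hKU : K ⊆ U S j P ∪ (S.lvl 0 0 \ U S j (D S j)) := by
    intro x hx
    by_cases h : x ∈ U S j (D S j)
    · obtain ⟨a, ha, hxa⟩ := Set.mem_iUnion₂.1 h
      exact Or.inl (Set.mem_iUnion₂.2 ⟨a, Finset.mem_filter.2 ⟨ha, x, hxa, hx⟩, hxa⟩)
    · exact Or.inr ⟨hAI (hKA hx), h⟩
  have hsub : symmDiff A (U S j P) ⊆ (V \ A ∪ A \ K) ∪ (S.lvl 0 0 \ U S j (D S j)) := by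
    intro x hx
    have h1 := @hUV x
    have h2 := @hKU x
    simp only [Set.mem_symmDiff, Set.mem_union, Set.mem_sdiff] at hx h2 ⊢
    tauto
  have hle : S.μ (symmDiff A (U S j P)) ≤ ENNReal.ofReal ε := by
    refine (measure_mono hsub).trans ((measure_union_le _ _).trans ?_)
    rw [U_D_null H j, add_zero]
    refine (Measure.restrict_le_self _).trans ((measure_union_le _ _).trans ?_)
    refine (add_le_add hVε.le hKε.le).trans ?_
    rw [← ENNReal.ofReal_add (by positivity) (by positivity)]
    simp
  exact ENNReal.toReal_le_of_le_ofReal hε.le hle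

lemma union_bound (H : Hyp c S) (j : ℕ) {P Q : Finset ℕ} (hP : P ⊆ D S j) (hQ : Q ⊆ D S j) :
    ∃ δ : ℕ → ℝ, Tendsto δ atTop (nhds 0) ∧
    ∀ N, j ≤ N → ∀ n, 2 * n ≤ S.h N + 1 →
      ∑ k ∈ Finset.range n, |cor S (U S j P) (U S j Q) k -
        S.μ.real (U S j P) * S.μ.real (U S j Q) * S.u (S.lvl 0 0) k| ≤ 3 ^ N * δ N := by
  obtain ⟨δ, hδ, hb⟩ := level_bound H j
  have hD := D_bound H j
  set w := S.w j with hw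
  set C : ℝ := w ^ 2 * ∑ a ∈ P, ∑ b ∈ Q, ∑ a' ∈ D S j, ∑ b' ∈ D S j, (1 : ℝ) with hC
  refine ⟨fun N => C * δ N, by simpa using hδ.const_mul C, fun N hN n hn => ?_⟩
  have hPb : ∀ a ∈ P, 3 * a ≤ S.h j := fun a ha => hD a (hP ha)
  have hQb : ∀ a ∈ Q, 3 * a ≤ S.h j := fun a ha => hD a (hQ ha)
  have hu : ∀ k, S.u (S.lvl 0 0) k = ∑ a' ∈ D S j, ∑ b' ∈ D S j, m S j a' b' k := by
    intro k
    rw [u_eq, ← cor_U H hD hD]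
    exact cor_congr k (U_D_sub H j) (U_D_null H j) (U_D_sub H j) (U_D_null H j)
      (meas_lvl _ _) (meas_U _ _)
  have hdw : ((D S j).card : ℝ) * w = 1 := D_card_w H j
  have key : ∀ k, cor S (U S j P) (U S j Q) k -
        S.μ.real (U S j P) * S.μ.real (U S j Q) * S.u (S.lvl 0 0) k
      = w ^ 2 * ∑ a ∈ P, ∑ b ∈ Q, ∑ a' ∈ D S j, ∑ b' ∈ D S j,
          (m S j a b k - m S j a' b' k) := by
    intro k
    rw [cor_U H hPb hQb, mu_U H hPb, mu_U H hQb, hu]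
    simp only [Finset.sum_sub_distrib, Finset.sum_const, nsmul_eq_mul, ← Finset.mul_sum]
    rw [← hw]
    have e : ∀ x : ℝ, w ^ 2 * (((D S j).card : ℝ) * (((D S j).card : ℝ) * x)) = x := by
      intro x
      have : w ^ 2 * (((D S j).card : ℝ) * (((D S j).card : ℝ) * x))
        = (((D S j).card : ℝ) * w) ^ 2 * x := by ring
      rw [this, hdw]; ring
    rw [mul_sub, e]
    ring
  have hw2 : 0 ≤ w ^ 2 := sq_nonneg w
  calc ∑ k ∈ Finset.range n, |cor S (U S j P) (U S j Q) k -
        S.μ.real (U S j P) * S.μ.real (U S j Q) * S.u (S.lvl 0 0) k|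
      ≤ ∑ k ∈ Finset.range n, w ^ 2 * ∑ a ∈ P, ∑ b ∈ Q, ∑ a' ∈ D S j, ∑ b' ∈ D S j,
          |m S j a b k - m S j a' b' k| := by
        refine Finset.sum_le_sum fun k _ => ?_
        rw [key, abs_mul, abs_of_nonneg hw2]
        refine mul_le_mul_of_nonneg_left ?_ hw2
        refine (Finset.abs_sum_le_sum_abs _ _).trans (Finset.sum_le_sum fun a _ => ?_)
        refine (Finset.abs_sum_le_sum_abs _ _).trans (Finset.sum_le_sum fun b _ => ?_)
        refine (Finset.abs_sum_le_sum_abs _ _).trans (Finset.sum_le_sum fun a' _ => ?_)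
        exact Finset.abs_sum_le_sum_abs _ _
    _ = w ^ 2 * ∑ a ∈ P, ∑ b ∈ Q, ∑ a' ∈ D S j, ∑ b' ∈ D S j, ∑ k ∈ Finset.range n,
          |m S j a b k - m S j a' b' k| := by
        rw [← Finset.mul_sum, Finset.sum_comm]
        congr 1
        refine Finset.sum_congr rfl fun a _ => ?_
        rw [Finset.sum_comm]
        refine Finset.sum_congr rfl fun b _ => ?_
        rw [Finset.sum_comm]
        refine Finset.sum_congr rfl fun a' _ => ?_
        rw [Finset.sum_comm]
    _ ≤ w ^ 2 * ∑ a ∈ P, ∑ b ∈ Q, ∑ a' ∈ D S j, ∑ b' ∈ D S j, (1 * (3 ^ N * δ N)) := by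
        refine mul_le_mul_of_nonneg_left ?_ hw2
        refine Finset.sum_le_sum fun a ha => Finset.sum_le_sum fun b hb' =>
          Finset.sum_le_sum fun a' ha' => Finset.sum_le_sum fun b' hb'' => ?_
        rw [one_mul]
        exact hb N hN n hn a b a' b' (hPb a ha) (hQb b hb') (hD a' ha') (hD b' hb'')
    _ = 3 ^ N * (C * δ N) := by
        simp only [← Finset.sum_mul]
        rw [hC]; ring

end Aux18

namespace Aux18
variable {c : ℕ} {S : RankOne}

lemma real_le_one {E : Set ℝ} (hE : E ⊆ S.lvl 0 0) : S.μ.real E ≤ 1 := by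
  have : S.μ.real (S.lvl 0 0) = 1 := by simp [Measure.real, mu_I]
  rw [← this]
  exact measureReal_mono hE (fin_of_sub le_rfl)

lemma final (H : Hyp c S) {A B : Set ℝ} (hA : MeasurableSet A) (hAI : A ⊆ S.lvl 0 0)
    (hB : MeasurableSet B) (hBI : B ⊆ S.lvl 0 0) :
    Tendsto (fun n => (S.a (S.lvl 0 0) n)⁻¹ *
        ∑ k ∈ Finset.range n,
          |cor S A B k - S.μ.real A * S.μ.real B * S.u (S.lvl 0 0) k|)
      atTop (nhds 0) := by
  rw [Metric.tendsto_atTop]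
  intro ε hε
  obtain ⟨j₁, hj₁⟩ := approx H hA hAI (show 0 < ε / 48 by positivity)
  obtain ⟨j₂, hj₂⟩ := approx H hB hBI (show 0 < ε / 48 by positivity)
  set j := max j₁ j₂
  obtain ⟨P, hP, hPA⟩ := hj₁ j (le_max_left _ _)
  obtain ⟨Q, hQ, hQB⟩ := hj₂ j (le_max_right _ _)
  obtain ⟨δ, hδ, hδb⟩ := union_bound H j hP hQ
  obtain ⟨N₀, hN₀⟩ := (Metric.tendsto_atTop.1 hδ) (ε / 12) (by positivity)
  set M := max j N₀ with hM
  refine ⟨S.h M + 2, fun n hn => ?_⟩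
  have hex : ∃ N, 2 * n ≤ S.h N + 1 := by
    refine ⟨2 * n, ?_⟩
    have h1 := H.nine_pow (2 * n)
    have h2 : 2 * n < 9 ^ (2 * n) := Nat.lt_pow_self (by norm_num)
    omega
  classical
  obtain ⟨N, hN⟩ : ∃ N, N = Nat.find hex := ⟨_, rfl⟩
  have hNs : 2 * n ≤ S.h N + 1 := hN ▸ Nat.find_spec hex
  have hMN : M < N := by
    by_contra h
    have := H.hmono (not_lt.1 h)
    omega
  obtain ⟨K, rfl⟩ : ∃ K, N = K + 1 := ⟨N - 1, by omega⟩
  have hK : S.h K ≤ 2 * n := by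
    have := Nat.find_min hex (m := K) (by omega)
    omega
  have hlow := lower H hK
  set a := S.a (S.lvl 0 0) n with ha
  have hUP : U S j P ⊆ S.lvl 0 0 :=
    (Set.biUnion_subset_biUnion_left (fun x hx => hP hx)).trans (U_D_sub H j)
  have hUQ : U S j Q ⊆ S.lvl 0 0 :=
    (Set.biUnion_subset_biUnion_left (fun x hx => hQ hx)).trans (U_D_sub H j)
  have hsA : symmDiff A (U S j P) ⊆ S.lvl 0 0 :=
    Set.symmDiff_subset_union.trans (Set.union_subset hAI hUP)
  have hsB : symmDiff B (U S j Q) ⊆ S.lvl 0 0 :=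
    Set.symmDiff_subset_union.trans (Set.union_subset hBI hUQ)
  have hδN : δ (K + 1) < ε / 12 := by
    have := hN₀ (K + 1) (by omega)
    rw [Real.dist_eq, sub_zero] at this
    exact (le_abs_self _).trans_lt this
  have h3 : (0 : ℝ) < 3 ^ (K + 1) := by positivity
  have b1 : ∑ k ∈ Finset.range n, |cor S A B k - cor S (U S j P) (U S j Q) k|
      ≤ 3 ^ (K + 1) * (ε / 48) + 3 ^ (K + 1) * (ε / 48) := by
    refine (Finset.sum_le_sum fun k _ => cor_diff hA hAI (meas_U j P) hUP hB (meas_U j Q) k).trans ?_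
    rw [Finset.sum_add_distrib]
    refine add_le_add ?_ ?_
    · exact (upper_left' H hNs (hA.symmDiff (meas_U _ _)) hsA hBI).trans (by gcongr)
    · exact (upper_right' H hNs hUP (hB.symmDiff (meas_U _ _)) hsB).trans (by gcongr)
  have b2 := hδb (K + 1) (by omega) n hNs
  have b3 : a ≤ 3 ^ (K + 1) := by
    have := upper_left' H hNs (meas_lvl 0 0) (le_refl (S.lvl 0 0)) (le_refl (S.lvl 0 0))
    rw [ha, RankOne.a]
    simp_rw [u_eq]
    refine this.trans ?_
    have := real_le_one (le_refl (S.lvl 0 0))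
    exact mul_le_of_le_one_right h3.le this
  have hdA : |S.μ.real A - S.μ.real (U S j P)| ≤ ε / 48 :=
    (abs_measureReal_sub_le_measureReal_symmDiff' hA.nullMeasurableSet
      (meas_U _ _).nullMeasurableSet (fin_of_sub hAI) (fin_of_sub hUP)).trans hPA
  have hdB : |S.μ.real B - S.μ.real (U S j Q)| ≤ ε / 48 :=
    (abs_measureReal_sub_le_measureReal_symmDiff' hB.nullMeasurableSet
      (meas_U _ _).nullMeasurableSet (fin_of_sub hBI) (fin_of_sub hUQ)).trans hQB
  have hB0 : 0 ≤ S.μ.real B := measureReal_nonneg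
  have hP0 : 0 ≤ S.μ.real (U S j P) := measureReal_nonneg
  have hprod : |S.μ.real (U S j P) * S.μ.real (U S j Q) - S.μ.real A * S.μ.real B| ≤ ε / 24 := by
    have e : S.μ.real (U S j P) * S.μ.real (U S j Q) - S.μ.real A * S.μ.real B
        = -((S.μ.real A - S.μ.real (U S j P)) * S.μ.real B)
          - S.μ.real (U S j P) * (S.μ.real B - S.μ.real (U S j Q)) := by ring
    rw [e]
    refine (abs_sub _ _).trans ?_
    rw [abs_neg, abs_mul, abs_mul, abs_of_nonneg hB0, abs_of_nonneg hP0]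
    have := mul_le_mul hdA (real_le_one hBI) hB0 (by positivity)
    have := mul_le_mul (real_le_one hUP) hdB (abs_nonneg _) zero_le_one
    linarith
  have hu0 : ∀ k, 0 ≤ S.u (S.lvl 0 0) k := fun k => by rw [u_eq]; exact measureReal_nonneg
  have btot : ∑ k ∈ Finset.range n, |cor S A B k - S.μ.real A * S.μ.real B * S.u (S.lvl 0 0) k|
      ≤ 3 ^ (K + 1) * (ε / 12 + δ (K + 1)) := by
    calc _ ≤ ∑ k ∈ Finset.range n, (|cor S A B k - cor S (U S j P) (U S j Q) k|
          + |cor S (U S j P) (U S j Q) k -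
              S.μ.real (U S j P) * S.μ.real (U S j Q) * S.u (S.lvl 0 0) k|
          + (ε / 24) * S.u (S.lvl 0 0) k) := by
          refine Finset.sum_le_sum fun k _ => ?_
          have h1 := abs_sub_le (cor S A B k) (cor S (U S j P) (U S j Q) k)
            (S.μ.real A * S.μ.real B * S.u (S.lvl 0 0) k)
          have h2 := abs_sub_le (cor S (U S j P) (U S j Q) k)
            (S.μ.real (U S j P) * S.μ.real (U S j Q) * S.u (S.lvl 0 0) k)
            (S.μ.real A * S.μ.real B * S.u (S.lvl 0 0) k)
          rw [← sub_mul, abs_mul, abs_of_nonneg (hu0 k)] at h2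
          have h4 := mul_le_mul_of_nonneg_right hprod (hu0 k)
          linarith
      _ = ∑ k ∈ Finset.range n, |cor S A B k - cor S (U S j P) (U S j Q) k|
          + ∑ k ∈ Finset.range n, |cor S (U S j P) (U S j Q) k -
              S.μ.real (U S j P) * S.μ.real (U S j Q) * S.u (S.lvl 0 0) k|
          + (ε / 24) * a := by
          rw [Finset.sum_add_distrib, Finset.sum_add_distrib, ← Finset.mul_sum]; rfl
      _ ≤ (3 ^ (K + 1) * (ε / 48) + 3 ^ (K + 1) * (ε / 48)) + 3 ^ (K + 1) * δ (K + 1)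
          + (ε / 24) * 3 ^ (K + 1) := by gcongr
      _ = _ := by ring
  have hapos : 0 < a := lt_of_lt_of_le (by positivity) hlow
  rw [Real.dist_eq, sub_zero, abs_of_nonneg (mul_nonneg (inv_nonneg.2 hapos.le)
    (Finset.sum_nonneg fun _ _ => abs_nonneg _)), inv_mul_lt_iff₀ hapos]
  refine btot.trans_lt ?_
  have h6 : (3 : ℝ) ^ (K + 1) ≤ 6 * a := by rw [pow_succ]; linarith
  calc (3 : ℝ) ^ (K + 1) * (ε / 12 + δ (K + 1)) < 3 ^ (K + 1) * (ε / 6) := by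
        apply mul_lt_mul_of_pos_left _ h3; linarith
    _ ≤ 6 * a * (ε / 6) := by gcongr
    _ = a * ε := by ring

end Aux18

/-- For any fixed integer `c ≥ 2`, the Chacón-like rank-one transformation
with `r n = 3`, `s n 0 = 0`, `s n 1 = 1` and `h (n+1) = 3^c * h n` is rationally weakly
mixing: with `F = I` the unit interval, for all measurable `A, B ⊆ I`,
`(1/a_n(I)) ∑_{k<n} |μ(A ∩ T^k B) - μ(A)μ(B) u_k(I)| → 0`. -/
theorem statement18 (c : ℕ) (hc : 2 ≤ c) (S : RankOne)
    (hr : ∀ n, S.r n = 3) (hs0 : ∀ n, S.s n 0 = 0) (hs1 : ∀ n, S.s n 1 = 1)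
    (hh : ∀ n, S.h (n + 1) = 3 ^ c * S.h n)
    (A B : Set ℝ) (hA : MeasurableSet A) (hAI : A ⊆ S.lvl 0 0)
    (hB : MeasurableSet B) (hBI : B ⊆ S.lvl 0 0) :
    Tendsto (fun n => (S.a (S.lvl 0 0) n)⁻¹ *
        ∑ k ∈ Finset.range n,
          |(S.μ (A ∩ (⇑S.T)^[k] '' B)).toReal -
            (S.μ A).toReal * (S.μ B).toReal * S.u (S.lvl 0 0) k|)
      atTop (nhds 0) := by
  exact Aux18.final (c := c) ⟨hc, hr, hs0, hs1, hh⟩ hA hAI hB hBI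
end

section
/- The normalized total variation of the binomial coefficients tends to zero: lim_{n→∞} 2^{−n} ∑_{k=0}^{n−1} |C(n, k+1) − C(n, k)| = 0, where C(n, k) denotes the binomial coefficient n choose k. -/
open MeasureTheory Filter Set Pointwise

/-- Variance of the symmetric binomial distribution. -/
lemma variance_half (N : ℕ) :
    ∑ j ∈ Finset.range (N + 1), (N.choose j : ℝ) * ((N : ℝ) / 2 - j) ^ 2 = (2 : ℝ) ^ N * ((N : ℝ) / 4) := by
  have h := congrArg (Polynomial.eval (1 / 2 : ℝ)) (bernsteinPolynomial.variance ℝ N)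
  simp only [bernsteinPolynomial, Polynomial.eval_finsetSum, Polynomial.eval_mul,
    Polynomial.eval_pow, Polynomial.eval_sub, Polynomial.eval_natCast, Polynomial.eval_X,
    Polynomial.eval_one, nsmul_eq_mul] at h
  have h2 : (N : ℝ) / 4 = N * (1 / 2) * (1 - 1 / 2) := by ring
  rw [h2, ← h, Finset.mul_sum]
  refine Finset.sum_congr rfl fun j hj => ?_
  have hj' : j ≤ N := by simpa [Nat.lt_succ_iff] using hj
  have e : (1 / 2 : ℝ) ^ j * (1 / 2) ^ (N - j) * 2 ^ N = 1 := by
    rw [← pow_add, Nat.add_sub_cancel' hj', ← mul_pow]; norm_num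
  have e1 : (1 - 1 / 2 : ℝ) = 1 / 2 := by norm_num
  rw [e1]
  linear_combination (-(N.choose j : ℝ) * ((N : ℝ) / 2 - j) ^ 2) * e

lemma diff_eq (n k : ℕ) :
    ((n : ℝ) + 1) * ((n.choose (k + 1) : ℝ) - n.choose k)
      = ((n + 1).choose (k + 1) : ℝ) * (2 * (((n + 1 : ℕ) : ℝ) / 2 - ((k + 1 : ℕ) : ℝ))) := by
  have h1 : ((n : ℝ) + 1) * n.choose k = (n + 1).choose (k + 1) * (k + 1) := by
    exact_mod_cast Nat.add_one_mul_choose_eq n k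
  have h2 : ((n + 1).choose (k + 1) : ℝ) = n.choose k + n.choose (k + 1) := by
    exact_mod_cast Nat.choose_succ_succ n k
  push_cast
  linear_combination -2 * h1 - ((n : ℝ) + 1) * h2

lemma main_bound (n : ℕ) :
    ((2 : ℝ) ^ n)⁻¹ *
        ∑ k ∈ Finset.range n, |((n.choose (k + 1) : ℝ)) - ((n.choose k : ℝ))|
      ≤ (5 / 2) * (√((n : ℝ) + 1))⁻¹ := by
  set s := √((n : ℝ) + 1) with hs
  have hs0 : 0 < s := Real.sqrt_pos.2 (by positivity)
  have hss : s * s = (n : ℝ) + 1 := Real.mul_self_sqrt (by positivity)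
  set f : ℕ → ℝ := fun j =>
    ((n + 1).choose j : ℝ) * ((((n + 1 : ℕ) : ℝ) / 2 - j) ^ 2 + s * s) with hf
  have hf0 : ∀ j, 0 ≤ f j := fun j => by simp only [hf]; positivity
  have hterm : ∀ k, (s * s * s) * |((n.choose (k + 1) : ℝ)) - ((n.choose k : ℝ))| ≤ f (k + 1) := by
    intro k
    have h := congrArg abs (diff_eq n k)
    rw [abs_mul, abs_mul, abs_mul, ← hss, abs_of_pos (mul_pos hs0 hs0), Nat.abs_cast, abs_two] at h
    simp only [hf]
    set y := ((n + 1 : ℕ) : ℝ) / 2 - ((k + 1 : ℕ) : ℝ)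
    calc _ = s * (s * s * |((n.choose (k + 1) : ℝ)) - ((n.choose k : ℝ))|) := by ring
      _ = ((n + 1).choose (k + 1) : ℝ) * (2 * |y| * s) := by rw [h]; ring
      _ ≤ _ := by
        gcongr
        nlinarith [sq_nonneg (|y| - s), sq_abs y]
  have hsum : ∑ j ∈ Finset.range (n + 1 + 1), f j = 2 ^ (n + 1) * (5 / 4 * (s * s)) := by
    have hc : ∑ j ∈ Finset.range (n + 1 + 1), ((n + 1).choose j : ℝ) = 2 ^ (n + 1) := by
      exact_mod_cast Nat.sum_range_choose (n + 1)
    simp only [hf, mul_add, Finset.sum_add_distrib]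
    rw [← Finset.sum_mul, hc, variance_half, hss]
    push_cast; ring
  have hle : (s * s * s) * ∑ k ∈ Finset.range n, |((n.choose (k + 1) : ℝ)) - ((n.choose k : ℝ))|
      ≤ 2 ^ (n + 1) * (5 / 4 * (s * s)) := by
    rw [← hsum, Finset.mul_sum, Finset.sum_range_succ', Finset.sum_range_succ]
    have := Finset.sum_le_sum (fun k (_ : k ∈ Finset.range n) => hterm k)
    linarith [hf0 0, hf0 (n + 1)]
  have h3 : s * ∑ k ∈ Finset.range n, |((n.choose (k + 1) : ℝ)) - ((n.choose k : ℝ))|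
      ≤ 2 ^ n * (5 / 2) := by
    refine le_of_mul_le_mul_left ?_ (mul_pos hs0 hs0)
    rw [pow_succ] at hle
    linarith
  rw [inv_mul_le_iff₀ (by positivity), ← mul_assoc, ← div_eq_mul_inv, le_div_iff₀ hs0]
  linarith

/-- The normalized total variation of the binomial coefficients tends to
zero: `2⁻ⁿ ∑_{k<n} |C(n, k+1) - C(n, k)| → 0`. -/
theorem statement19 :
    Tendsto (fun n : ℕ => ((2 : ℝ) ^ n)⁻¹ *
        ∑ k ∈ Finset.range n, |((n.choose (k + 1) : ℝ)) - ((n.choose k : ℝ))|)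
      atTop (nhds 0) := by
  refine squeeze_zero (fun n => by positivity) main_bound ?_
  have h : Tendsto (fun n : ℕ => (√((n : ℝ) + 1))⁻¹) atTop (nhds 0) :=
    tendsto_inv_atTop_zero.comp (Real.tendsto_sqrt_atTop.comp
      (tendsto_atTop_add_const_right _ _ tendsto_natCast_atTop_atTop))
  simpa using h.const_mul (5 / 2)
end
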